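/- For any translation-invariant Gibbs measure μ for the 1-2 model on the hexagonal lattice ℍ (with any weights a, b, c > 0), μ-almost every 1-2 model configuration ω ∈ Ω has at most one infinite {001}-cluster. -/

import Mathlib

open MeasureTheory

/-- Vertices of the hexagonal lattice: `(x, y, t)` with `t = true` the "upper" vertex. -/
abbrev HexV : Type := ℤ × ℤ × Bool

/-- Edges of the hexagonal lattice: `(x, y, k)` with `k = 0` the a-type (horizontal) edge
joining `(x,y,1)` to `(x,y,0)`, `k = 1` the b-type edge joining `(x,y,1)` to `(x+1,y,0)`,
`k = 2` the c-type edge joining `(x,y,1)` to `(x,y+1,0)`. -/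
abbrev HexE : Type := ℤ × ℤ × Fin 3

/-- A configuration assigns present/absent to each edge. -/
abbrev Config : Type := HexE → Bool

def end1 (e : HexE) : HexV := (e.1, e.2.1, true)

def end2 (e : HexE) : HexV :=
  if e.2.2 = 0 then (e.1, e.2.1, false)
  else if e.2.2 = 1 then (e.1 + 1, e.2.1, false)
  else (e.1, e.2.1 + 1, false)

/-- The edges incident to a vertex, indexed so that index `0` is the a-type (horizontal)
edge, index `1` the b-type edge, index `2` the c-type edge. -/
def edgesAt (v : HexV) : Fin 3 → HexE := fun i =>
  if v.2.2 then (v.1, v.2.1, i)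
  else if i = 0 then (v.1, v.2.1, 0)
  else if i = 1 then (v.1 - 1, v.2.1, 1)
  else (v.1, v.2.1 - 1, 2)

/-- Local configuration of `ω` at `v`: digit `0` (rightmost) is the a-type edge,
digit `1` the b-type edge, digit `2` (leftmost) the c-type edge. -/
def localConf (ω : Config) (v : HexV) : Fin 3 → Bool := fun i => ω (edgesAt v i)

/-- A 1-2 model configuration: every vertex is incident to one or two present edges. -/
def IsConfig (ω : Config) : Prop :=
  ∀ v : HexV,
    1 ≤ (Finset.univ.filter fun i : Fin 3 => localConf ω v i = true).card ∧
    (Finset.univ.filter fun i : Fin 3 => localConf ω v i = true).card ≤ 2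

/-- The local configuration type `{001}` : only the a-type (horizontal) edge is present. -/
def conf001 : Fin 3 → Bool := ![true, false, false]

/-- The six admissible local configuration types `{001},…,{110}`. -/
def validConf (τ : Fin 3 → Bool) : Prop :=
  τ ≠ ![false, false, false] ∧ τ ≠ ![true, true, true]

/-- Vertex weight: `w(001)=w(110)=a`, `w(010)=w(101)=b`, `w(011)=w(100)=c`. -/
def weight (a b c : ℝ) (f : Fin 3 → Bool) : ℝ :=
  match f 2, f 1, f 0 with
  | false, false, true  => a
  | true,  true,  false => a
  | false, true,  false => b
  | true,  false, true  => b
  | false, true,  true  => c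
  | true,  false, false => c
  | false, false, false => 0
  | true,  true,  true  => 0

/-- Adjacency in the hexagonal lattice. -/
def HexAdj (v w : HexV) : Prop :=
  v ≠ w ∧ ∃ e : HexE, (v = end1 e ∨ v = end2 e) ∧ (w = end1 e ∨ w = end2 e)

/-- Adjacency restricted to a vertex set `S`. -/
def adjIn (S : Set HexV) (v w : HexV) : Prop := HexAdj v w ∧ v ∈ S ∧ w ∈ S

/-- The connected component of `v` in the subgraph induced on `S`. -/
def compOf (S : Set HexV) (v : HexV) : Set HexV := {w | Relation.ReflTransGen (adjIn S) v w}

/-- `C` is a connected component of the subgraph induced on `S`. -/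
def IsCompOf (S : Set HexV) (C : Set HexV) : Prop := ∃ v ∈ S, C = compOf S v

/-- Vertices whose local configuration equals `τ`. -/
def confSet (ω : Config) (τ : Fin 3 → Bool) : Set HexV := {v | localConf ω v = τ}

/-- A `τ`-cluster of `ω`. -/
def IsCluster (ω : Config) (τ : Fin 3 → Bool) (C : Set HexV) : Prop :=
  IsCompOf (confSet ω τ) C

/-- The number of infinite `τ`-clusters of `ω`, as an extended natural number. -/
noncomputable def numInfClusters (ω : Config) (τ : Fin 3 → Bool) : ℕ∞ :=
  {C : Set HexV | IsCluster ω τ C ∧ C.Infinite}.encard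

def endsFinset (e : HexE) : Finset HexV := {end1 e, end2 e}

/-- Vertices incident to an edge of `F`. -/
def verts (F : Finset HexE) : Finset HexV := F.biUnion endsFinset

/-- Edges sharing an endpoint with an edge of `F`. -/
def edgeNbhd (F : Finset HexE) : Set HexE :=
  {e' | ∃ e ∈ F,
    end1 e = end1 e' ∨ end1 e = end2 e' ∨ end2 e = end1 e' ∨ end2 e = end2 e'}

/-- Cylinder event: configurations agreeing with `σ` on `S`. -/
def cyl (S : Set HexE) (σ : Config) : Set Config := {ω | ∀ e ∈ S, ω e = σ e}

/-- A Gibbs measure for the 1-2 model with weights `a`, `b`, `c`. -/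
def IsGibbs (a b c : ℝ) (μ : Measure Config) : Prop :=
  IsProbabilityMeasure μ ∧ μ {ω | IsConfig ω} = 1 ∧
  ∀ F : Finset HexE, ∀ σ τ : Config, IsConfig σ → IsConfig τ →
    (∀ e ∉ F, σ e = τ e) →
    μ (cyl (↑F ∪ edgeNbhd F) σ) *
        ENNReal.ofReal (∏ v ∈ verts F, weight a b c (localConf τ v)) =
      μ (cyl (↑F ∪ edgeNbhd F) τ) *
        ENNReal.ofReal (∏ v ∈ verts F, weight a b c (localConf σ v))

/-- Translation of edges by `g ∈ ℤ²`. -/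
def shiftE (g : ℤ × ℤ) (e : HexE) : HexE := (e.1 + g.1, e.2.1 + g.2, e.2.2)

/-- Induced translation action on configurations. -/
def shiftConfig (g : ℤ × ℤ) (ω : Config) : Config := fun e => ω (shiftE g e)

/-- Translation invariance of a measure on configurations. -/
def TransInvariant (μ : Measure Config) : Prop :=
  ∀ g : ℤ × ℤ, μ.map (shiftConfig g) = μ

/-- Ergodicity: every translation-invariant measurable event has measure `0` or `1`. -/
def IsErgodicTI (μ : Measure Config) : Prop :=
  ∀ A : Set Config, MeasurableSet A → (∀ g, shiftConfig g ⁻¹' A = A) → μ A = 0 ∨ μ A = 1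

/-- The box `B_n(i,j)`. -/
def box (n : ℕ) (i j : ℤ) : Set HexV :=
  {v | |v.1 - i| ≤ (n : ℤ) ∧ |v.2.1 - j| ≤ (n : ℤ)}

/-- Vertices outside `B` adjacent to a vertex of `B`. -/
def outerBoundary (B : Set HexV) : Set HexV := {v | v ∉ B ∧ ∃ w ∈ B, HexAdj v w}

/-- `B_N(i,j)` is an encounter box for `ω` with respect to the infinite `{001}`-cluster `C`. -/
def IsEncounterBoxWrt (ω : Config) (N : ℕ) (i j : ℤ) (C : Set HexV) : Prop :=
  IsCluster ω conf001 C ∧ C.Infinite ∧ box N i j ⊆ C ∧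
  (∀ D, IsCompOf (C \ box (N + 2) i j) D → D.Infinite) ∧
  {D : Set HexV | IsCompOf (C \ box (N + 2) i j) D ∧ D.Infinite}.encard = 3

/-- `B_N(i,j)` is an encounter box for `ω`. -/
def IsEncounterBox (ω : Config) (N : ℕ) (i j : ℤ) : Prop :=
  ∃ C : Set HexV, IsEncounterBoxWrt ω N i j C

/-- A 3-partition of `Y`: an unordered triple of pairwise disjoint nonempty sets with union `Y`. -/
def IsThreePartition {α : Type*} (Y : Set α) (P : Set (Set α)) : Prop :=
  ∃ P₁ P₂ P₃ : Set α, P = {P₁, P₂, P₃} ∧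
    P₁.Nonempty ∧ P₂.Nonempty ∧ P₃.Nonempty ∧
    Disjoint P₁ P₂ ∧ Disjoint P₁ P₃ ∧ Disjoint P₂ P₃ ∧
    P₁ ∪ P₂ ∪ P₃ = Y

/-- Two 3-partitions are compatible if their parts can be ordered so that `Q₂ ∪ Q₃ ⊆ P₁`. -/
def CompatiblePartitions {α : Type*} (P Q : Set (Set α)) : Prop :=
  ∃ P₁ ∈ P, ∃ Q₁ ∈ Q, ∀ R ∈ Q, R ≠ Q₁ → R ⊆ P₁


abbrev Reach (S : Set HexV) (u v : HexV) : Prop := Relation.ReflTransGen (adjIn S) u v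

lemma hexAdj_iff (x y x' y' : ℤ) (s t : Bool) : HexAdj (x, y, s) (x', y', t) ↔
    (s = true ∧ t = false ∧ ((x' = x ∧ y' = y) ∨ (x' = x + 1 ∧ y' = y) ∨ (x' = x ∧ y' = y + 1))) ∨
    (s = false ∧ t = true ∧ ((x = x' ∧ y = y') ∨ (x = x' + 1 ∧ y = y') ∨ (x = x' ∧ y = y' + 1))) := by
  unfold HexAdj end1 end2
  constructor
  · rintro ⟨hne, ⟨e1, e2, k⟩, h1, h2⟩
    fin_cases k <;> simp at h1 h2 hne <;> grind
  · rintro (⟨rfl, rfl, h⟩ | ⟨rfl, rfl, h⟩)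
    · refine ⟨by simp, ?_⟩
      rcases h with ⟨rfl, rfl⟩ | ⟨rfl, rfl⟩ | ⟨rfl, rfl⟩
      · exact ⟨(x', y', 0), by simp⟩
      · exact ⟨(x, y', 1), by simp⟩
      · exact ⟨(x', y, 2), by simp⟩
    · refine ⟨by simp, ?_⟩
      rcases h with ⟨rfl, rfl⟩ | ⟨rfl, rfl⟩ | ⟨rfl, rfl⟩
      · exact ⟨(x, y, 0), by simp⟩
      · exact ⟨(x', y, 1), by simp⟩
      · exact ⟨(x, y', 2), by simp⟩

lemma hexAdj_symm {v w : HexV} (h : HexAdj v w) : HexAdj w v :=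
  ⟨h.1.symm, h.2.imp fun _ h => ⟨h.2, h.1⟩⟩

lemma hexAdj_bound {v w : HexV} (h : HexAdj v w) :
    v.1 - 1 ≤ w.1 ∧ w.1 ≤ v.1 + 1 ∧ v.2.1 - 1 ≤ w.2.1 ∧ w.2.1 ≤ v.2.1 + 1 := by
  obtain ⟨x, y, s⟩ := v
  obtain ⟨x', y', t⟩ := w
  rw [hexAdj_iff] at h
  simp only
  omega

lemma hexAdj_finite (v : HexV) : {w | HexAdj v w}.Finite := by
  refine Set.Finite.subset ((Set.finite_Icc (v.1 - 1) (v.1 + 1)).prod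
    ((Set.finite_Icc (v.2.1 - 1) (v.2.1 + 1)).prod (Set.finite_univ (α := Bool)))) ?_
  intro w hw
  have := hexAdj_bound hw
  simp only [Set.mem_prod, Set.mem_Icc, Set.mem_univ]
  tauto

lemma reach_mono {S T : Set HexV} (h : S ⊆ T) {u v : HexV} (hr : Reach S u v) : Reach T u v :=
  Relation.ReflTransGen.mono (r := adjIn S) (p := adjIn T)
    (fun _ _ h' => ⟨h'.1, h h'.2.1, h h'.2.2⟩) _ _ hr

lemma reach_symm {S : Set HexV} {u v : HexV} (hr : Reach S u v) : Reach S v u := by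
  induction hr with
  | refl => exact .refl
  | tail _ h ih => exact .head ⟨hexAdj_symm h.1, h.2.2, h.2.1⟩ ih

lemma reach_mem {S : Set HexV} {u v : HexV} (hr : Reach S u v) (hu : u ∈ S) : v ∈ S := by
  induction hr with
  | refl => exact hu
  | tail _ h _ => exact h.2.2

lemma reach_single {S : Set HexV} {u v : HexV} (h : HexAdj u v) (hu : u ∈ S) (hv : v ∈ S) :
    Reach S u v := .single ⟨h, hu, hv⟩

/-- path decomposition: from `v ∈ K` to `z ∉ K`, the part after the last visit to `K`. -/
lemma last_exit {S K : Set HexV} {v z : HexV} (hv : v ∈ K) (hr : Reach S v z) (hz : z ∉ K) :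
    ∃ p ∈ S \ K, ∃ k ∈ K, HexAdj p k ∧ Reach S v p ∧ Reach (S \ K) p z := by
  induction hr with
  | refl => exact absurd hv hz
  | @tail b c hb hbc ih =>
    by_cases hbK : b ∈ K
    · exact ⟨c, ⟨hbc.2.2, hz⟩, b, hbK, hexAdj_symm hbc.1, hb.tail hbc, .refl⟩
    · obtain ⟨p, hp, k, hk, h1, h2, h3⟩ := ih hbK
      exact ⟨p, hp, k, hk, h1, h2, h3.tail ⟨hbc.1, ⟨hbc.2.1, hbK⟩, ⟨hbc.2.2, hz⟩⟩⟩

lemma exists_inf_branch {S K : Set HexV} (hK : K.Finite) {v : HexV} (hv : v ∈ K)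
    (hinf : (compOf S v).Infinite) :
    ∃ p ∈ S \ K, (∃ k ∈ K, HexAdj p k) ∧ Reach S v p ∧ (compOf (S \ K) p).Infinite := by
  by_contra hcon
  push Not at hcon
  apply hinf
  let P : Set HexV := {p | p ∈ S \ K ∧ (∃ k ∈ K, HexAdj p k) ∧ Reach S v p}
  have hP : P.Finite := by
    refine Set.Finite.subset (hK.biUnion fun k _ => hexAdj_finite k) ?_
    rintro p ⟨_, ⟨k, hk, h⟩, _⟩
    simp only [Set.mem_iUnion]
    exact ⟨k, hk, hexAdj_symm h⟩
  refine Set.Finite.subset (hK.union (hP.biUnion (t := fun p => compOf (S \ K) p) ?_)) ?_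
  · rintro p ⟨h1, ⟨k, hk, h2⟩, h3⟩
    simpa using hcon p h1 ⟨k, hk, h2⟩ h3
  · intro z hz
    by_cases hzK : z ∈ K
    · exact Or.inl hzK
    · obtain ⟨p, hp, k, hk, h1, h2, h3⟩ := last_exit hv hz hzK
      right
      simp only [Set.mem_iUnion]
      exact ⟨p, ⟨hp, ⟨k, hk, h1⟩, h2⟩, h3⟩

def IsTrif (S : Set HexV) (K : Set HexV) : Prop :=
  K ⊆ S ∧ (∀ u ∈ K, ∀ v ∈ K, Reach K u v) ∧ K.Nonempty ∧
    ∃ p q r : HexV, (∀ z, (z = p ∨ z = q ∨ z = r) →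
      z ∈ S \ K ∧ (∃ k ∈ K, HexAdj z k) ∧ (compOf (S \ K) z).Infinite) ∧
      ¬ Reach (S \ K) p q ∧ ¬ Reach (S \ K) p r ∧ ¬ Reach (S \ K) q r


open Classical in
noncomputable def nMeet (𝒦 : Finset (Set HexV)) (S K : Set HexV) (p : HexV) : ℕ :=
  (𝒦.filter fun K' => (K' ∩ compOf (S \ K) p).Nonempty).card

lemma nMeet_zero {𝒦 : Finset (Set HexV)} {S K : Set HexV} {p : HexV} (h : nMeet 𝒦 S K p = 0) :
    ∀ K' ∈ 𝒦, Disjoint K' (compOf (S \ K) p) := by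
  classical
  intro K' hK'
  rw [nMeet, Finset.card_eq_zero, Finset.filter_eq_empty_iff] at h
  exact Set.disjoint_iff_inter_eq_empty.2 (Set.not_nonempty_iff_eq_empty.1 (h hK'))

/-- conclusion of the extremal lemma -/
def GoodEnd (𝒦 : Finset (Set HexV)) (S : Set HexV) : Prop :=
  ∃ K ∈ 𝒦, ∃ p q : HexV,
    (∀ z, (z = p ∨ z = q) → z ∈ S \ K ∧ (∃ k ∈ K, HexAdj z k) ∧ (compOf (S \ K) z).Infinite ∧
      ∀ K' ∈ 𝒦, Disjoint K' (compOf (S \ K) z)) ∧ ¬ Reach (S \ K) p q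

lemma extremal_aux {𝒦 : Finset (Set HexV)} {S : Set HexV}
    (hdisj : ∀ K ∈ 𝒦, ∀ K' ∈ 𝒦, K ≠ K' → Disjoint K K')
    (htrif : ∀ K ∈ 𝒦, IsTrif S K) :
    ∀ n : ℕ, ∀ K ∈ 𝒦, ∀ p ∈ S \ K, nMeet 𝒦 S K p = n → n ≠ 0 → GoodEnd 𝒦 S := by
  classical
  intro n
  induction n using Nat.strong_induction_on with
  | _ n ih =>
  intro K hK p hp hn hn0
  have : ∃ K' ∈ 𝒦, (K' ∩ compOf (S \ K) p).Nonempty := by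
    by_contra hcon
    push Not at hcon
    apply hn0
    rw [← hn, nMeet, Finset.card_eq_zero, Finset.filter_eq_empty_iff]
    intro x hx
    rw [hcon x hx]; simp
  obtain ⟨K', hK', w, hw, hpw⟩ := this
  have hwS : w ∈ S \ K := reach_mem hpw hp
  have hne : K ≠ K' := by rintro rfl; exact hwS.2 hw
  have hd := hdisj K hK K' hK' hne
  obtain ⟨hKS, hKc, ⟨k0, hk0⟩, -⟩ := htrif K hK
  obtain ⟨hKS', hKc', hKn', p1, p2, p3, hb, h12, h13, h23⟩ := htrif K' hK'
  have hsub : K' ⊆ S \ K := fun x hx => ⟨hKS' hx, fun hxK => Set.disjoint_left.1 hd hxK hx⟩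
  have hsub2 : K ⊆ S \ K' := fun x hx => ⟨hKS hx, fun hxK => Set.disjoint_left.1 hd hx hxK⟩
  have hK'D : ∀ x ∈ K', Reach (S \ K) p x := fun x hx =>
    Relation.ReflTransGen.trans hpw (reach_mono hsub (hKc' w hw x hx))
  -- a branch which does not reach `k0`
  have key : ∀ z, (z = p1 ∨ z = p2 ∨ z = p3) → ¬ Reach (S \ K') z k0 →
      nMeet 𝒦 S K' z < n := by
    intro z hz hzk
    obtain ⟨hzS, ⟨k, hk, hzk'⟩, hinf⟩ := hb z hz
    have hav : ∀ x, Reach (S \ K') z x → x ∉ K := by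
      intro x hx hxK
      exact hzk (Relation.ReflTransGen.trans hx (reach_mono hsub2 (hKc x hxK k0 hk0)))
    have hpz : Reach (S \ K) p z := (hK'D k hk).tail
      ⟨hexAdj_symm hzk', hsub hk, hzS.1, hav z .refl⟩
    have hss : compOf (S \ K') z ⊆ compOf (S \ K) p := by
      intro x hx
      have hx' : Reach (S \ K') z x := hx
      clear hx
      change Reach (S \ K) p x
      induction hx' with
      | refl => exact hpz
      | @tail b c hb hbc ih' =>
        exact ih'.tail ⟨hbc.1, ⟨hbc.2.1.1, hav b hb⟩, ⟨hbc.2.2.1, hav c (hb.tail hbc)⟩⟩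
    rw [← hn, nMeet, nMeet]
    apply Finset.card_lt_card
    rw [Finset.ssubset_iff_of_subset]
    · refine ⟨K', ?_, ?_⟩
      · simp only [Finset.mem_filter]
        exact ⟨hK', w, hw, hpw⟩
      · simp only [Finset.mem_filter, not_and]
        rintro - ⟨x, hx, hx'⟩
        exact (reach_mem hx' hzS).2 hx
    · intro A hA
      simp only [Finset.mem_filter] at hA ⊢
      exact ⟨hA.1, hA.2.mono (Set.inter_subset_inter_right _ hss)⟩
  have key2 : ∀ z z', (z = p1 ∨ z = p2 ∨ z = p3) → (z' = p1 ∨ z' = p2 ∨ z' = p3) →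
      ¬ Reach (S \ K') z k0 → ¬ Reach (S \ K') z' k0 → ¬ Reach (S \ K') z z' → GoodEnd 𝒦 S := by
    intro z z' hz hz' h h' hzz
    by_cases h0 : nMeet 𝒦 S K' z = 0
    · by_cases h0' : nMeet 𝒦 S K' z' = 0
      · refine ⟨K', hK', z, z', ?_, hzz⟩
        rintro y (rfl | rfl)
        · exact ⟨(hb y hz).1, (hb y hz).2.1, (hb y hz).2.2, nMeet_zero h0⟩
        · exact ⟨(hb y hz').1, (hb y hz').2.1, (hb y hz').2.2, nMeet_zero h0'⟩
      · exact ih _ (key z' hz' h') K' hK' z' (hb z' hz').1 rfl h0'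
    · exact ih _ (key z hz h) K' hK' z (hb z hz).1 rfl h0
  have tr : ∀ z z', Reach (S \ K') z k0 → Reach (S \ K') z' k0 → Reach (S \ K') z z' :=
    fun z z' h h' => Relation.ReflTransGen.trans h (reach_symm h')
  by_cases h1 : Reach (S \ K') p1 k0
  · have h2 : ¬ Reach (S \ K') p2 k0 := fun h => h12 (tr _ _ h1 h)
    have h3 : ¬ Reach (S \ K') p3 k0 := fun h => h13 (tr _ _ h1 h)
    exact key2 p2 p3 (by simp) (by simp) h2 h3 h23
  · by_cases h2 : Reach (S \ K') p2 k0
    · have h3 : ¬ Reach (S \ K') p3 k0 := fun h => h23 (tr _ _ h2 h)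
      exact key2 p1 p3 (by simp) (by simp) h1 h3 h13
    · exact key2 p1 p2 (by simp) (by simp) h1 h2 h12

lemma extremal {𝒦 : Finset (Set HexV)} {S : Set HexV}
    (hdisj : ∀ K ∈ 𝒦, ∀ K' ∈ 𝒦, K ≠ K' → Disjoint K K')
    (htrif : ∀ K ∈ 𝒦, IsTrif S K) (hne : 𝒦.Nonempty) : GoodEnd 𝒦 S := by
  obtain ⟨K, hK⟩ := hne
  obtain ⟨-, -, -, p, q, r, hb, h12, -, -⟩ := htrif K hK
  by_cases h0 : nMeet 𝒦 S K p = 0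
  · by_cases h0' : nMeet 𝒦 S K q = 0
    · refine ⟨K, hK, p, q, ?_, h12⟩
      rintro y (rfl | rfl)
      · exact ⟨(hb y (by simp)).1, (hb y (by simp)).2.1, (hb y (by simp)).2.2, nMeet_zero h0⟩
      · exact ⟨(hb y (by simp)).1, (hb y (by simp)).2.1, (hb y (by simp)).2.2, nMeet_zero h0'⟩
    · exact extremal_aux hdisj htrif _ K hK q (hb q (by simp)).1 rfl h0'
  · exact extremal_aux hdisj htrif _ K hK p (hb p (by simp)).1 rfl h0

/-- Burton–Keane counting lemma. -/
lemma burton_keane_count (L Y : Set HexV) (hL : L.Finite) (hY : Y.Finite)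
    (hLY : ∀ v ∈ L, ∀ w, HexAdj v w → w ∈ L ∨ w ∈ Y) :
    ∀ n : ℕ, ∀ (S : Set HexV) (𝒦 : Finset (Set HexV)), 𝒦.card = n →
    (∀ K ∈ 𝒦, ∀ K' ∈ 𝒦, K ≠ K' → Disjoint K K') →
    (∀ K ∈ 𝒦, IsTrif S K) → (∀ K ∈ 𝒦, K ⊆ L) → n ≤ (Y ∩ S).ncard := by
  classical
  intro n
  induction n with
  | zero => intros; simp
  | succ n ih =>
    intro S 𝒦 hcard hdisj htrif hsub
    obtain ⟨K, hK, p, q, hb, hpq⟩ := extremal hdisj htrif (Finset.card_pos.1 (by omega))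
    obtain ⟨hpS, ⟨kp, hkp, hpk⟩, hpinf, hpd⟩ := hb p (by simp)
    obtain ⟨hqS, ⟨kq, hkq, hqk⟩, hqinf, hqd⟩ := hb q (by simp)
    obtain ⟨hKS, hKc, -, -⟩ := htrif K hK
    set D := compOf (S \ K) p with hD
    -- `D` meets `Y`
    have hDY : ∃ y ∈ Y, y ∈ D := by
      obtain ⟨z, hz, hzL⟩ := hpinf.exists_notMem_finite hL
      have : ∀ x, Reach (S \ K) p x → x ∈ L ∨ ∃ y ∈ Y, y ∈ D := by
        intro x hx
        induction hx with
        | refl =>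
          rcases hLY kp (hsub K hK hkp) p (hexAdj_symm hpk) with h | h
          · exact Or.inl h
          · exact Or.inr ⟨p, h, .refl⟩
        | @tail b c hb hbc ih' =>
          rcases ih' with h | h
          · rcases hLY b h c hbc.1 with h | h
            · exact Or.inl h
            · exact Or.inr ⟨c, h, hb.tail hbc⟩
          · exact Or.inr h
      rcases this z hz with h | h
      · exact absurd h hzL
      · exact h
    have hDS : D ⊆ S \ K := fun x hx => reach_mem hx hpS
    have hcl : ∀ x ∈ D, ∀ y ∈ S \ K, HexAdj x y → y ∈ D := fun x hx y hy hxy =>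
      Relation.ReflTransGen.tail hx ⟨hxy, hDS hx, hy⟩
    have hIH := ih (S \ D) (𝒦.erase K) (by rw [Finset.card_erase_of_mem hK]; omega)
      (fun A hA B hB => hdisj A (Finset.mem_of_mem_erase hA) B (Finset.mem_of_mem_erase hB))
      ?_ (fun A hA => hsub A (Finset.mem_of_mem_erase hA))
    · obtain ⟨y, hy, hyD⟩ := hDY
      have hlt : (Y ∩ (S \ D)).ncard < (Y ∩ S).ncard := by
        apply Set.ncard_lt_ncard _ (hY.inter_of_left _)
        refine ⟨Set.inter_subset_inter_right _ Set.sdiff_subset, fun h => ?_⟩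
        exact (h ⟨hy, (hDS hyD).1⟩).2.2 hyD
      omega
    · intro K' hK'
      have hne : K' ≠ K := Finset.ne_of_mem_erase hK'
      replace hK' := Finset.mem_of_mem_erase hK'
      have hd := hdisj K' hK' K hK hne
      have hpd' := hpd K' hK'
      have hqd' := hqd K' hK'
      obtain ⟨hKS', hKc', hKn', p1, p2, p3, hb', h12, h13, h23⟩ := htrif K' hK'
      have hm : (S \ D) \ K' ⊆ S \ K' := fun x hx => ⟨hx.1.1, hx.2⟩
      refine ⟨fun x hx => ⟨hKS' hx, fun h => Set.disjoint_left.1 hpd' hx h⟩, hKc', hKn',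
        p1, p2, p3, ?_, fun h => h12 (reach_mono hm h), fun h => h13 (reach_mono hm h),
        fun h => h23 (reach_mono hm h)⟩
      intro z hz
      obtain ⟨hzS, ⟨k, hk, hzk⟩, hinf⟩ := hb' z hz
      have hkS : k ∈ S \ K := ⟨hKS' hk, fun h => Set.disjoint_left.1 hd hk h⟩
      have hzD : z ∉ D := fun h => Set.disjoint_left.1 hpd' hk (hcl z h k hkS hzk)
      refine ⟨⟨⟨hzS.1, hzD⟩, hzS.2⟩, ⟨k, hk, hzk⟩, ?_⟩
      by_cases hall : ∀ x, Reach (S \ K') z x → Reach ((S \ D) \ K') z x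
      · exact hinf.mono hall
      · push Not at hall
        obtain ⟨x, hx, hnx⟩ := hall
        have claim : ∀ x, Reach (S \ K') z x → Reach ((S \ D) \ K') z x ∨
            ∃ k1 ∈ K, Reach ((S \ D) \ K') z k1 := by
          intro x hx
          induction hx with
          | refl => exact Or.inl .refl
          | @tail b c hb hbc ih' =>
            rcases ih' with h | h
            · have hbm : b ∈ (S \ D) \ K' := reach_mem h ⟨⟨hzS.1, hzD⟩, hzS.2⟩
              by_cases hc : c ∈ D
              · right
                refine ⟨b, ?_, h⟩
                by_contra hbK
                exact hbm.1.2 (hcl c hc b ⟨hbm.1.1, hbK⟩ (hexAdj_symm hbc.1))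
              · exact Or.inl (h.tail ⟨hbc.1, hbm, ⟨⟨hbc.2.2.1, hc⟩, hbc.2.2.2⟩⟩)
            · exact Or.inr h
        rcases claim x hx with h | ⟨k1, hk1, h⟩
        · exact absurd h hnx
        · have hKsub : K ⊆ (S \ D) \ K' := fun y hy =>
            ⟨⟨hKS hy, fun h => (hDS h).2 hy⟩, fun h => Set.disjoint_left.1 hd h hy⟩
          have hqsub : ∀ y, Reach (S \ K) q y → y ∈ (S \ D) \ K' := by
            intro y hy
            have hyS := reach_mem hy hqS
            refine ⟨⟨hyS.1, fun h => ?_⟩, fun h => Set.disjoint_left.1 hqd' h hy⟩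
            exact hpq (Relation.ReflTransGen.trans h (reach_symm hy))
          have hzq : Reach ((S \ D) \ K') z q :=
            (Relation.ReflTransGen.trans h (reach_mono hKsub (hKc k1 hk1 kq hkq))).tail
              ⟨hexAdj_symm hqk, hKsub hkq, hqsub q .refl⟩
          refine hqinf.mono ?_
          intro y hy
          have hy' : Reach (S \ K) q y := hy
          clear hy
          change Reach _ z y
          induction hy' with
          | refl => exact hzq
          | @tail b c hb hbc ih' => exact ih'.tail ⟨hbc.1, hqsub b hb, hqsub c (hb.tail hbc)⟩


abbrev alive (ω : Config) : Set HexV := confSet ω conf001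

lemma alive_top (ω : Config) (x y : ℤ) : (x, y, true) ∈ alive ω ↔
    ω (x, y, 0) = true ∧ ω (x, y, 1) = false ∧ ω (x, y, 2) = false := by
  simp only [alive, confSet, Set.mem_ofPred_eq, funext_iff, Fin.forall_fin_succ]
  simp [localConf, edgesAt, conf001]

lemma alive_bot (ω : Config) (x y : ℤ) : (x, y, false) ∈ alive ω ↔
    ω (x, y, 0) = true ∧ ω (x - 1, y, 1) = false ∧ ω (x, y - 1, 2) = false := by
  simp only [alive, confSet, Set.mem_ofPred_eq, funext_iff, Fin.forall_fin_succ]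
  simp [localConf, edgesAt, conf001]

lemma isConfig_iff (ω : Config) : IsConfig ω ↔ ∀ x y : ℤ,
    (¬ (ω (x, y, 0) = ω (x, y, 1) ∧ ω (x, y, 1) = ω (x, y, 2))) ∧
    (¬ (ω (x, y, 0) = ω (x - 1, y, 1) ∧ ω (x - 1, y, 1) = ω (x, y - 1, 2))) := by
  have key : ∀ f : Fin 3 → Bool, (1 ≤ (Finset.univ.filter fun i : Fin 3 => f i = true).card ∧
    (Finset.univ.filter fun i : Fin 3 => f i = true).card ≤ 2) ↔ ¬ (f 0 = f 1 ∧ f 1 = f 2) := by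
    decide
  unfold IsConfig
  constructor
  · intro h x y
    have h1 := (key _).1 (h (x, y, true))
    have h2 := (key _).1 (h (x, y, false))
    simp [localConf, edgesAt] at h1 h2 ⊢
    exact ⟨h1, h2⟩
  · rintro h ⟨x, y, t⟩
    rw [key]
    have := h x y
    cases t <;> simp [localConf, edgesAt] at this ⊢ <;> tauto

def patch (F : Finset HexE) (ρ ω : Config) : Config := fun e => if e ∈ F then ρ e else ω e

def rho : Config := fun e => decide (e.2.2 = 0)

/-- edges of the rectangle -/
noncomputable def rectE (x0 x1 y0 y1 : ℤ) : Finset HexE :=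
  (Finset.Icc x0 x1 ×ˢ (Finset.Icc y0 y1 ×ˢ Finset.univ)).filter
    fun e => (e.2.2 = 1 → e.1 < x1) ∧ (e.2.2 = 2 → e.2.1 < y1)

lemma mem_rectE0 (x0 x1 y0 y1 x y : ℤ) : (x, y, 0) ∈ rectE x0 x1 y0 y1 ↔
    (x0 ≤ x ∧ x ≤ x1) ∧ y0 ≤ y ∧ y ≤ y1 := by simp [rectE]
lemma mem_rectE1 (x0 x1 y0 y1 x y : ℤ) : (x, y, 1) ∈ rectE x0 x1 y0 y1 ↔
    (x0 ≤ x ∧ x < x1) ∧ y0 ≤ y ∧ y ≤ y1 := by simp [rectE]; omega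
lemma mem_rectE2 (x0 x1 y0 y1 x y : ℤ) : (x, y, 2) ∈ rectE x0 x1 y0 y1 ↔
    (x0 ≤ x ∧ x ≤ x1) ∧ y0 ≤ y ∧ y < y1 := by simp [rectE]; omega

noncomputable abbrev Phi (x0 x1 y0 y1 : ℤ) (ω : Config) : Config := patch (rectE x0 x1 y0 y1) rho ω

def rectK (x0 x1 y0 y1 : ℤ) : Set HexV :=
  {v | (x0 ≤ v.1 ∧ v.1 ≤ x1) ∧ (y0 ≤ v.2.1 ∧ v.2.1 ≤ y1) ∧ ¬ (v.1 = x0 ∧ v.2.1 = y0) ∧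
    ¬ (v.1 = x1 ∧ v.2.1 = y1)}

def rectU (x0 x1 y0 y1 : ℤ) : Set HexV :=
  {v | (x0 ≤ v.1 ∧ v.1 ≤ x1) ∧ (y0 ≤ v.2.1 ∧ v.2.1 ≤ y1)}

lemma rectU_finite (x0 x1 y0 y1 : ℤ) : (rectU x0 x1 y0 y1).Finite := by
  refine Set.Finite.subset ((Set.finite_Icc x0 x1).prod
    ((Set.finite_Icc y0 y1).prod (Set.finite_univ (α := Bool)))) ?_
  intro w hw
  simp only [Set.mem_prod, Set.mem_Icc, Set.mem_univ]
  exact ⟨hw.1, hw.2, trivial⟩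

lemma rectK_sub (x0 x1 y0 y1 : ℤ) : rectK x0 x1 y0 y1 ⊆ rectU x0 x1 y0 y1 :=
  fun _ h => ⟨h.1, h.2.1⟩

section
variable {x0 x1 y0 y1 : ℤ} {ω : Config}

lemma Phi0 (x y : ℤ) : Phi x0 x1 y0 y1 ω (x, y, 0) =
    if (x0 ≤ x ∧ x ≤ x1) ∧ y0 ≤ y ∧ y ≤ y1 then true else ω (x, y, 0) := by
  simp only [patch, mem_rectE0]; simp [rho]
lemma Phi1 (x y : ℤ) : Phi x0 x1 y0 y1 ω (x, y, 1) =
    if (x0 ≤ x ∧ x < x1) ∧ y0 ≤ y ∧ y ≤ y1 then false else ω (x, y, 1) := by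
  simp only [patch, mem_rectE1]; simp [rho]
lemma Phi2 (x y : ℤ) : Phi x0 x1 y0 y1 ω (x, y, 2) =
    if (x0 ≤ x ∧ x ≤ x1) ∧ y0 ≤ y ∧ y < y1 then false else ω (x, y, 2) := by
  simp only [patch, mem_rectE2]; simp [rho]

lemma Phi_isConfig (hω : IsConfig ω) (ht : (x1, y1, true) ∈ alive ω)
    (hb : (x0, y0, false) ∈ alive ω) : IsConfig (Phi x0 x1 y0 y1 ω) := by
  rw [isConfig_iff] at hω ⊢
  rw [alive_top] at ht
  rw [alive_bot] at hb
  intro x y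
  have := hω x y
  rw [Phi0, Phi1, Phi2, Phi1, Phi2]
  by_cases hU : (x0 ≤ x ∧ x ≤ x1) ∧ y0 ≤ y ∧ y ≤ y1
  · rw [if_pos hU]
    constructor
    · by_cases h1 : x < x1
      · rw [if_pos (by omega)]; simp
      · by_cases h2 : y < y1
        · rw [if_pos (c := _ ∧ y0 ≤ y ∧ y < y1) (by omega)]; intro h; have := h.1.trans h.2; simp at this
        · obtain rfl : x = x1 := by omega
          obtain rfl : y = y1 := by omega
          simp [ht]
    · by_cases h1 : x0 < x
      · rw [if_pos (by omega)]; simp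
      · by_cases h2 : y0 < y
        · rw [if_pos (c := _ ∧ y0 ≤ y - 1 ∧ y - 1 < y1) (by omega)]; intro h; have := h.1.trans h.2; simp at this
        · obtain rfl : x = x0 := by omega
          obtain rfl : y = y0 := by omega
          simp [hb]
  · rw [if_neg hU, if_neg (by omega), if_neg (by omega), if_neg (by omega), if_neg (by omega)]
    exact this

lemma Phi_alive_mono : alive ω ⊆ alive (Phi x0 x1 y0 y1 ω) := by
  rintro ⟨x, y, t⟩ h
  cases t
  · rw [alive_bot] at h ⊢
    rw [Phi0, Phi1, Phi2]
    simp [h]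
  · rw [alive_top] at h ⊢
    rw [Phi0, Phi1, Phi2]
    simp [h]

lemma Phi_alive_out {v : HexV} (hv : v ∉ rectU x0 x1 y0 y1)
    (h : v ∈ alive (Phi x0 x1 y0 y1 ω)) : v ∈ alive ω := by
  obtain ⟨x, y, t⟩ := v
  simp only [rectU, Set.mem_ofPred_eq] at hv
  cases t
  · rw [alive_bot] at h ⊢
    rw [Phi0, Phi1, Phi2, if_neg (by omega), if_neg (by omega), if_neg (by omega)] at h
    exact h
  · rw [alive_top] at h ⊢
    rw [Phi0, Phi1, Phi2, if_neg (by omega), if_neg (by omega), if_neg (by omega)] at h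
    exact h

lemma Phi_core_top {x y : ℤ} (h : x0 ≤ x ∧ x < x1 ∧ y0 ≤ y ∧ y < y1) :
    (x, y, true) ∈ alive (Phi x0 x1 y0 y1 ω) := by
  rw [alive_top, Phi0, Phi1, Phi2, if_pos (by omega), if_pos (by omega), if_pos (by omega)]
  simp

lemma Phi_core_bot {x y : ℤ} (h : x0 < x ∧ x ≤ x1 ∧ y0 < y ∧ y ≤ y1) :
    (x, y, false) ∈ alive (Phi x0 x1 y0 y1 ω) := by
  rw [alive_bot, Phi0, Phi1, Phi2, if_pos (by omega), if_pos (by omega), if_pos (by omega)]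
  simp

abbrev Kset (x0 x1 y0 y1 : ℤ) (ω : Config) : Set HexV := rectK x0 x1 y0 y1 ∩ alive ω

lemma K_bot_conn (hx : x0 + 2 ≤ x1) (hy : y0 + 2 ≤ y1) : ∀ n : ℕ, ∀ x y : ℤ,
    x0 < x ∧ x ≤ x1 ∧ y0 < y ∧ y ≤ y1 → ¬ (x = x1 ∧ y = y1) → x + y - x0 - y0 = n →
    Reach (Kset x0 x1 y0 y1 (Phi x0 x1 y0 y1 ω)) (x, y, false) (x0 + 1, y0 + 1, false) := by
  intro n
  induction n with
  | zero => intro x y h1 h2 h3; omega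
  | succ n ih =>
    intro x y h1 h2 h3
    have m0 : (x, y, false) ∈ Kset x0 x1 y0 y1 (Phi x0 x1 y0 y1 ω) :=
      ⟨by simp only [rectK, Set.mem_ofPred_eq]; omega, Phi_core_bot h1⟩
    by_cases hA : x0 + 1 < x ∧ y < y1
    · refine .trans ?_ (ih (x - 1) y (by omega) (by omega) (by omega))
      have m1 : (x - 1, y, true) ∈ Kset x0 x1 y0 y1 (Phi x0 x1 y0 y1 ω) :=
        ⟨by simp only [rectK, Set.mem_ofPred_eq]; omega, Phi_core_top (by omega)⟩
      have m2 : (x - 1, y, false) ∈ Kset x0 x1 y0 y1 (Phi x0 x1 y0 y1 ω) :=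
        ⟨by simp only [rectK, Set.mem_ofPred_eq]; omega, Phi_core_bot (by omega)⟩
      exact (reach_single (by rw [hexAdj_iff]; simp) m0 m1).trans
        (reach_single (by rw [hexAdj_iff]; simp) m1 m2)
    · by_cases hB : y0 + 1 < y ∧ x < x1
      · refine .trans ?_ (ih x (y - 1) (by omega) (by omega) (by omega))
        have m1 : (x, y - 1, true) ∈ Kset x0 x1 y0 y1 (Phi x0 x1 y0 y1 ω) :=
          ⟨by simp only [rectK, Set.mem_ofPred_eq]; omega, Phi_core_top (by omega)⟩
        have m2 : (x, y - 1, false) ∈ Kset x0 x1 y0 y1 (Phi x0 x1 y0 y1 ω) :=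
          ⟨by simp only [rectK, Set.mem_ofPred_eq]; omega, Phi_core_bot (by omega)⟩
        exact (reach_single (by rw [hexAdj_iff]; simp) m0 m1).trans
          (reach_single (by rw [hexAdj_iff]; simp) m1 m2)
      · obtain ⟨rfl, rfl⟩ : x = x0 + 1 ∧ y = y0 + 1 := by omega
        exact .refl

lemma K_top_conn (hx : x0 + 2 ≤ x1) (hy : y0 + 2 ≤ y1) {x y : ℤ}
    (h : (x, y, true) ∈ Kset x0 x1 y0 y1 (Phi x0 x1 y0 y1 ω)) :
    Reach (Kset x0 x1 y0 y1 (Phi x0 x1 y0 y1 ω)) (x, y, true) (x0 + 1, y0 + 1, false) := by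
  have hK := h.1
  simp only [rectK, Set.mem_ofPred_eq] at hK
  have aux : ∀ x' y' : ℤ, x0 < x' ∧ x' ≤ x1 ∧ y0 < y' ∧ y' ≤ y1 → ¬ (x' = x1 ∧ y' = y1) →
      HexAdj (x, y, true) (x', y', false) →
      Reach (Kset x0 x1 y0 y1 (Phi x0 x1 y0 y1 ω)) (x, y, true) (x0 + 1, y0 + 1, false) := by
    intro x' y' h1 h2 h3
    have m1 : (x', y', false) ∈ Kset x0 x1 y0 y1 (Phi x0 x1 y0 y1 ω) :=
        ⟨by simp only [rectK, Set.mem_ofPred_eq]; omega, Phi_core_bot (by omega)⟩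
    exact (reach_single h3 h m1).trans
      (K_bot_conn hx hy (x' + y' - x0 - y0).toNat x' y' h1 h2 (by omega))
  by_cases h1 : x = x0
  · exact aux (x + 1) y (by omega) (by omega) (by rw [hexAdj_iff]; simp)
  · by_cases h2 : y = y0
    · exact aux x (y + 1) (by omega) (by omega) (by rw [hexAdj_iff]; simp)
    · exact aux x y (by omega) (by omega) (by rw [hexAdj_iff]; simp)

lemma K_conn (hx : x0 + 2 ≤ x1) (hy : y0 + 2 ≤ y1) {v : HexV}
    (h : v ∈ Kset x0 x1 y0 y1 (Phi x0 x1 y0 y1 ω)) :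
    Reach (Kset x0 x1 y0 y1 (Phi x0 x1 y0 y1 ω)) v (x0 + 1, y0 + 1, false) := by
  obtain ⟨x, y, t⟩ := v
  cases t
  swap
  · exact K_top_conn hx hy h
  have hK := h.1
  simp only [rectK, Set.mem_ofPred_eq] at hK
  have aux : ∀ x' y' : ℤ, x0 ≤ x' ∧ x' < x1 ∧ y0 ≤ y' ∧ y' < y1 → ¬ (x' = x0 ∧ y' = y0) →
      HexAdj (x, y, false) (x', y', true) →
      Reach (Kset x0 x1 y0 y1 (Phi x0 x1 y0 y1 ω)) (x, y, false) (x0 + 1, y0 + 1, false) := by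
    intro x' y' h1 h2 h3
    have m1 : (x', y', true) ∈ Kset x0 x1 y0 y1 (Phi x0 x1 y0 y1 ω) :=
        ⟨by simp only [rectK, Set.mem_ofPred_eq]; omega, Phi_core_top (by omega)⟩
    exact (reach_single h3 h m1).trans (K_top_conn hx hy m1)
  by_cases h1 : x = x1
  · exact aux (x - 1) y (by omega) (by omega) (by rw [hexAdj_iff]; simp)
  · by_cases h2 : y = y1
    · exact aux x (y - 1) (by omega) (by omega) (by rw [hexAdj_iff]; simp)
    · exact aux x y (by omega) (by omega) (by rw [hexAdj_iff]; simp)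

/-- new alive vertices outside `K` create no new connections -/
lemma label_claim (hx : x0 + 2 ≤ x1) (hy : y0 + 2 ≤ y1) (ht : (x1, y1, true) ∈ alive ω)
    (hb : (x0, y0, false) ∈ alive ω) {u w : HexV} (hu : u ∈ alive ω) (hw : w ∈ alive ω)
    (h : Reach (alive (Phi x0 x1 y0 y1 ω) \ Kset x0 x1 y0 y1 (Phi x0 x1 y0 y1 ω)) u w) :
    Reach (alive ω) u w := by
  -- new vertices
  have hnew : ∀ v ∈ alive (Phi x0 x1 y0 y1 ω) \ Kset x0 x1 y0 y1 (Phi x0 x1 y0 y1 ω),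
      v ∉ alive ω → v = (x0, y0, true) ∨ v = (x1, y1, false) := by
    intro v hv hva
    have hU : v ∈ rectU x0 x1 y0 y1 := by
      by_contra hU
      exact hva (Phi_alive_out hU hv.1)
    have hnK : v ∉ rectK x0 x1 y0 y1 := fun h => hv.2 ⟨h, hv.1⟩
    obtain ⟨x, y, t⟩ := v
    simp only [rectK, rectU, Set.mem_ofPred_eq] at hU hnK
    have : (x = x0 ∧ y = y0) ∨ (x = x1 ∧ y = y1) := by omega
    rcases this with ⟨rfl, rfl⟩ | ⟨rfl, rfl⟩
    · cases t
      · exact absurd hb hva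
      · simp
    · cases t
      · simp
      · exact absurd ht hva
  have hn0 : ∀ v ∈ alive (Phi x0 x1 y0 y1 ω) \ Kset x0 x1 y0 y1 (Phi x0 x1 y0 y1 ω),
      HexAdj (x0, y0, true) v → v = (x0, y0, false) := by
    rintro ⟨x, y, t⟩ hv hadj
    have hnK : (x, y, t) ∉ rectK x0 x1 y0 y1 := fun h => hv.2 ⟨h, hv.1⟩
    rw [hexAdj_iff] at hadj
    simp only [rectK, Set.mem_ofPred_eq] at hnK
    simp only [Prod.mk.injEq]
    simp at hadj
    refine ⟨?_, ?_, hadj.1⟩ <;> omega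
  have hn1 : ∀ v ∈ alive (Phi x0 x1 y0 y1 ω) \ Kset x0 x1 y0 y1 (Phi x0 x1 y0 y1 ω),
      HexAdj (x1, y1, false) v → v = (x1, y1, true) := by
    rintro ⟨x, y, t⟩ hv hadj
    have hnK : (x, y, t) ∉ rectK x0 x1 y0 y1 := fun h => hv.2 ⟨h, hv.1⟩
    rw [hexAdj_iff] at hadj
    simp only [rectK, Set.mem_ofPred_eq] at hnK
    simp only [Prod.mk.injEq]
    simp at hadj
    refine ⟨?_, ?_, hadj.1⟩ <;> omega
  have main : (w ∈ alive ω → Reach (alive ω) u w) ∧ (w ∉ alive ω →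
      (w = (x0, y0, true) ∧ Reach (alive ω) u (x0, y0, false)) ∨
      (w = (x1, y1, false) ∧ Reach (alive ω) u (x1, y1, true))) := by
    clear hw
    induction h with
    | refl => exact ⟨fun _ => .refl, fun h => absurd hu h⟩
    | @tail b c hb' hbc ih =>
      by_cases hba : b ∈ alive ω
      · have hrb := ih.1 hba
        refine ⟨fun hc => hrb.tail ⟨hbc.1, hba, hc⟩, fun hc => ?_⟩
        rcases hnew c hbc.2.2 hc with rfl | rfl
        · left
          rw [hn0 b hbc.2.1 (hexAdj_symm hbc.1)] at hrb
          exact ⟨rfl, hrb⟩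
        · right
          rw [hn1 b hbc.2.1 (hexAdj_symm hbc.1)] at hrb
          exact ⟨rfl, hrb⟩
      · rcases ih.2 hba with ⟨rfl, h⟩ | ⟨rfl, h⟩
        · rw [hn0 c hbc.2.2 hbc.1]
          exact ⟨fun _ => h, fun h' => absurd hb h'⟩
        · rw [hn1 c hbc.2.2 hbc.1]
          exact ⟨fun _ => h, fun h' => absurd ht h'⟩
  exact main.1 hw

lemma Phi_trif (hx : x0 + 2 ≤ x1) (hy : y0 + 2 ≤ y1) (ht : (x1, y1, true) ∈ alive ω)
    (hb : (x0, y0, false) ∈ alive ω) {v1 v2 v3 : HexV}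
    (hv : ∀ z, (z = v1 ∨ z = v2 ∨ z = v3) → z ∈ rectK x0 x1 y0 y1 ∧ z ∈ alive ω ∧
      (compOf (alive ω) z).Infinite)
    (h12 : ¬ Reach (alive ω) v1 v2) (h13 : ¬ Reach (alive ω) v1 v3)
    (h23 : ¬ Reach (alive ω) v2 v3) :
    IsTrif (alive (Phi x0 x1 y0 y1 ω)) (Kset x0 x1 y0 y1 (Phi x0 x1 y0 y1 ω)) := by
  set S := alive ω with hS
  set S' := alive (Phi x0 x1 y0 y1 ω) with hS'
  set K := Kset x0 x1 y0 y1 (Phi x0 x1 y0 y1 ω) with hKdef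
  have hSS : S ⊆ S' := Phi_alive_mono
  have hKfin : K.Finite := (rectU_finite x0 x1 y0 y1).subset fun v hv => rectK_sub _ _ _ _ hv.1
  have hbr : ∀ z, (z = v1 ∨ z = v2 ∨ z = v3) → ∃ p ∈ S \ K, (∃ k ∈ K, HexAdj p k) ∧
      Reach S z p ∧ (compOf (S \ K) p).Infinite := by
    intro z hz
    obtain ⟨h1, h2, h3⟩ := hv z hz
    exact exists_inf_branch hKfin ⟨h1, hSS h2⟩ h3
  obtain ⟨p1, a1, b1, c1, d1⟩ := hbr v1 (by simp)
  obtain ⟨p2, a2, b2, c2, d2⟩ := hbr v2 (by simp)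
  obtain ⟨p3, a3, b3, c3, d3⟩ := hbr v3 (by simp)
  have hm : S \ K ⊆ S' \ K := fun x hx => ⟨hSS hx.1, hx.2⟩
  have hsep : ∀ v p v' p', p ∈ S → p' ∈ S → Reach S v p → Reach S v' p' → ¬ Reach S v v' →
      ¬ Reach (S' \ K) p p' := by
    intro v p v' p' hp hp' h h' hn hr
    exact hn ((h.trans (label_claim hx hy ht hb hp hp' hr)).trans (reach_symm h'))
  refine ⟨fun x hx => hx.2, fun u hu v hv => (K_conn hx hy hu).trans (reach_symm (K_conn hx hy hv)),
    ⟨v1, (hv v1 (by simp)).1, hSS (hv v1 (by simp)).2.1⟩, p1, p2, p3, ?_,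
    hsep _ _ _ _ a1.1 a2.1 c1 c2 h12, hsep _ _ _ _ a1.1 a3.1 c1 c3 h13,
    hsep _ _ _ _ a2.1 a3.1 c2 c3 h23⟩
  rintro z (rfl | rfl | rfl)
  · exact ⟨hm a1, b1, d1.mono fun y hy => reach_mono hm hy⟩
  · exact ⟨hm a2, b2, d2.mono fun y hy => reach_mono hm hy⟩
  · exact ⟨hm a3, b3, d3.mono fun y hy => reach_mono hm hy⟩

/-- two infinite clusters -/
def TwoInf (ω : Config) : Prop := ∃ v w, v ∈ alive ω ∧ w ∈ alive ω ∧
  (compOf (alive ω) v).Infinite ∧ (compOf (alive ω) w).Infinite ∧ ¬ Reach (alive ω) v w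

def ThreeInf (ω : Config) : Prop := ∃ v1 v2 v3 : HexV,
  (∀ z, (z = v1 ∨ z = v2 ∨ z = v3) → z ∈ alive ω ∧ (compOf (alive ω) z).Infinite) ∧
  ¬ Reach (alive ω) v1 v2 ∧ ¬ Reach (alive ω) v1 v3 ∧ ¬ Reach (alive ω) v2 v3

lemma Phi_merge (hx : x0 + 2 ≤ x1) (hy : y0 + 2 ≤ y1) {v1 v2 : HexV}
    (hv : ∀ z, (z = v1 ∨ z = v2) → z ∈ rectK x0 x1 y0 y1 ∧ z ∈ alive ω ∧
      (compOf (alive ω) z).Infinite)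
    (h12 : ¬ Reach (alive ω) v1 v2) (h3 : ¬ ThreeInf ω) : ¬ TwoInf (Phi x0 x1 y0 y1 ω) := by
  rintro ⟨u, w, hu, hw, hui, hwi, hn⟩
  set S := alive ω with hS
  set S' := alive (Phi x0 x1 y0 y1 ω) with hS'
  have hSS : S ⊆ S' := Phi_alive_mono
  have h12' : Reach S' v2 v1 := by
    have hsub : Kset x0 x1 y0 y1 (Phi x0 x1 y0 y1 ω) ⊆ S' := fun x hx => hx.2
    exact reach_mono hsub ((K_conn hx hy ⟨(hv v2 (by simp)).1, hSS (hv v2 (by simp)).2.1⟩).trans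
      (reach_symm (K_conn hx hy ⟨(hv v1 (by simp)).1, hSS (hv v1 (by simp)).2.1⟩)))
  have key : ∀ u ∈ S', (compOf S' u).Infinite → Reach S' u v1 := by
    intro u hu hui
    obtain ⟨p, hp, -, hup, hpi⟩ := exists_inf_branch (K := rectU x0 x1 y0 y1 ∪ {u})
      ((rectU_finite _ _ _ _).union (Set.finite_singleton u)) (Or.inr rfl) hui
    have hsub : S' \ (rectU x0 x1 y0 y1 ∪ {u}) ⊆ S := fun x hx =>
      Phi_alive_out (fun h => hx.2 (Or.inl h)) hx.1
    have hpS := hsub hp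
    have hpi' : (compOf S p).Infinite := hpi.mono fun y hy => reach_mono hsub hy
    by_cases h1 : Reach S v1 p
    · exact hup.trans (reach_mono hSS (reach_symm h1))
    by_cases h2 : Reach S v2 p
    · exact (hup.trans (reach_mono hSS (reach_symm h2))).trans h12'
    exact absurd ⟨v1, v2, p, by
      rintro z (rfl | rfl | rfl)
      · exact (hv z (by simp)).2
      · exact (hv z (by simp)).2
      · exact ⟨hpS, hpi'⟩, h12, h1, h2⟩ h3
  exact hn ((key u hu hui).trans (reach_symm (key w hw hwi)))
end


def HH (F : Finset HexE) : Set HexE := ↑F ∪ edgeNbhd F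

lemma HH_union (F F' : Finset HexE) : HH (F ∪ F') = HH F ∪ HH F' := by
  ext e
  simp only [HH, edgeNbhd, Set.mem_union, Finset.coe_union, Set.mem_ofPred_eq, Finset.mem_coe,
    Finset.mem_union]
  constructor
  · rintro (h | ⟨e', h | h, h'⟩)
    · tauto
    · exact Or.inl (Or.inr ⟨e', h, h'⟩)
    · exact Or.inr (Or.inr ⟨e', h, h'⟩)
  · rintro ((h | ⟨e', h, h'⟩) | (h | ⟨e', h, h'⟩))
    · tauto
    · exact Or.inr ⟨e', Or.inl h, h'⟩
    · tauto
    · exact Or.inr ⟨e', Or.inr h, h'⟩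

lemma HH_mono {F F' : Finset HexE} (h : F ⊆ F') : HH F ⊆ HH F' := by
  rw [← Finset.union_eq_right.2 h, HH_union]; exact Set.subset_union_left

lemma end2_cases (e : HexE) : end2 e = (e.1, e.2.1, false) ∨ end2 e = (e.1 + 1, e.2.1, false) ∨
    end2 e = (e.1, e.2.1 + 1, false) := by
  unfold end2; split_ifs <;> simp

lemma HH_finite (F : Finset HexE) : (HH F).Finite := by
  refine F.finite_toSet.union ?_
  have : edgeNbhd F ⊆ ⋃ e ∈ F, (Set.Icc (e.1 - 1) (e.1 + 1)) ×ˢ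
      ((Set.Icc (e.2.1 - 1) (e.2.1 + 1)) ×ˢ (Set.univ : Set (Fin 3))) := by
    rintro e' ⟨e, he, h⟩
    simp only [Set.mem_iUnion, Set.mem_prod, Set.mem_Icc, Set.mem_univ, and_true]
    refine ⟨e, he, ?_⟩
    rcases end2_cases e with h2 | h2 | h2 <;> rcases end2_cases e' with h2' | h2' | h2' <;>
      rw [h2, h2'] at h <;> simp only [end1, Prod.mk.injEq] at h <;> omega
  refine Set.Finite.subset (Set.Finite.biUnion F.finite_toSet fun e _ => ?_) this
  exact (Set.finite_Icc _ _).prod ((Set.finite_Icc _ _).prod Set.finite_univ)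

lemma edgesAt_end (v : HexV) (i : Fin 3) : v = end1 (edgesAt v i) ∨ v = end2 (edgesAt v i) := by
  obtain ⟨x, y, t⟩ := v
  cases t
  · right; fin_cases i <;> simp [edgesAt, end2]
  · left; simp [edgesAt, end1]

lemma edgesAt_mem {F : Finset HexE} {v : HexV} (hv : v ∈ verts F) (i : Fin 3) :
    edgesAt v i ∈ HH F := by
  right
  simp only [verts, endsFinset, Finset.mem_biUnion, Finset.mem_insert, Finset.mem_singleton] at hv
  obtain ⟨e, he, h⟩ := hv
  refine ⟨e, he, ?_⟩
  have := edgesAt_end v i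
  rcases h with h | h <;> rcases this with h' | h' <;> rw [← h, ← h'] <;> simp

lemma edgesAt_notMem {F : Finset HexE} {v : HexV} (hv : v ∉ verts F) (i : Fin 3) :
    edgesAt v i ∉ F := by
  intro h
  apply hv
  simp only [verts, endsFinset, Finset.mem_biUnion, Finset.mem_insert, Finset.mem_singleton]
  exact ⟨_, h, edgesAt_end v i⟩

lemma verts_mono {F F' : Finset HexE} (h : F ⊆ F') : verts F ⊆ verts F' :=
  Finset.biUnion_subset_biUnion_of_subset_left _ h

lemma cyl_eq {S : Set HexE} {ω σ : Config} (h : ω ∈ cyl S σ) : cyl S ω = cyl S σ := by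
  ext ξ
  exact forall₂_congr fun e he => by rw [h e he]

lemma weight_pos {a b c : ℝ} (ha : 0 < a) (hb : 0 < b) (hc : 0 < c) {σ : Config}
    (hσ : IsConfig σ) (v : HexV) : 0 < weight a b c (localConf σ v) := by
  have h := hσ v
  revert h
  generalize localConf σ v = f
  have key : ∀ f : Fin 3 → Bool, (1 ≤ (Finset.univ.filter fun i : Fin 3 => f i = true).card ∧
    (Finset.univ.filter fun i : Fin 3 => f i = true).card ≤ 2) ↔ ¬ (f 0 = f 1 ∧ f 1 = f 2) := by
    decide
  rw [key]
  unfold weight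
  cases f 0 <;> cases f 1 <;> cases f 2 <;> simp [*]

lemma patch_localConf_in {F : Finset HexE} {σ τ ω : Config} (h : ω ∈ cyl (HH F) σ)
    (hoff : ∀ e ∉ F, σ e = τ e) {v : HexV} (hv : v ∈ verts F) :
    localConf (patch F τ ω) v = localConf τ v := by
  funext i
  simp only [localConf, patch]
  split_ifs with hi
  · rfl
  · rw [h _ (edgesAt_mem hv i), hoff _ hi]

lemma patch_localConf_out {F : Finset HexE} {τ ω : Config} {v : HexV} (hv : v ∉ verts F) :
    localConf (patch F τ ω) v = localConf ω v := by
  funext i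
  simp only [localConf, patch]
  rw [if_neg (edgesAt_notMem hv i)]

lemma patch_isConfig {F : Finset HexE} {σ τ ω : Config} (h : ω ∈ cyl (HH F) σ)
    (hoff : ∀ e ∉ F, σ e = τ e) (hτ : IsConfig τ) (hω : IsConfig ω) : IsConfig (patch F τ ω) := by
  intro v
  by_cases hv : v ∈ verts F
  · rw [patch_localConf_in h hoff hv]; exact hτ v
  · rw [patch_localConf_out hv]; exact hω v

noncomputable def WW (a b c : ℝ) (F : Finset HexE) (σ : Config) : ENNReal :=
  ENNReal.ofReal (∏ v ∈ verts F, weight a b c (localConf σ v))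

section

lemma WW_ne_zero {a b c : ℝ} (ha : 0 < a) (hb : 0 < b) (hc : 0 < c) (F : Finset HexE) {σ : Config} (hσ : IsConfig σ) : WW a b c F σ ≠ 0 := by
  have : 0 < ∏ v ∈ verts F, weight a b c (localConf σ v) :=
    Finset.prod_pos fun v _ => weight_pos ha hb hc hσ v
  simp [WW, this]

lemma gibbs_cyl {a b c : ℝ} (ha : 0 < a) (hb : 0 < b) (hc : 0 < c) {μ : Measure Config}
    (hG : IsGibbs a b c μ) {F F' : Finset HexE} (hFF : F ⊆ F') {σ τ ξ : Config}
    (hτ : IsConfig τ) (hoff : ∀ e ∉ F, σ e = τ e) (hξ : IsConfig ξ) (hc' : ξ ∈ cyl (HH F) σ) :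
    μ (cyl (HH F') ξ) * WW a b c F τ = μ (cyl (HH F') (patch F τ ξ)) * WW a b c F σ := by
  have hp := patch_isConfig hc' hoff hτ hξ
  have h := hG.2.2 F' ξ (patch F τ ξ) hξ hp (by
    intro e he
    simp only [patch]
    rw [if_neg (fun h => he (hFF h))])
  change μ (cyl (HH F') ξ) * _ = μ (cyl (HH F') _) * _ at h
  rw [← Finset.prod_sdiff (verts_mono hFF), ← Finset.prod_sdiff (verts_mono hFF)] at h
  have e1 : ∏ v ∈ verts F, weight a b c (localConf (patch F τ ξ) v) =
      ∏ v ∈ verts F, weight a b c (localConf τ v) :=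
    Finset.prod_congr rfl fun v hv => by rw [patch_localConf_in hc' hoff hv]
  have e2 : ∏ v ∈ verts F, weight a b c (localConf ξ v) =
      ∏ v ∈ verts F, weight a b c (localConf σ v) :=
    Finset.prod_congr rfl fun v hv => by
      congr 1; funext i; exact hc' _ (edgesAt_mem hv i)
  have e3 : ∏ v ∈ verts F' \ verts F, weight a b c (localConf (patch F τ ξ) v) =
      ∏ v ∈ verts F' \ verts F, weight a b c (localConf ξ v) :=
    Finset.prod_congr rfl fun v hv => by
      rw [patch_localConf_out (Finset.mem_sdiff.1 hv).2]
  have e4 : 0 < ∏ v ∈ verts F' \ verts F, weight a b c (localConf ξ v) :=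
    Finset.prod_pos fun v _ => weight_pos ha hb hc hξ v
  rw [e1, e2, e3, ENNReal.ofReal_mul e4.le, ENNReal.ofReal_mul e4.le] at h
  have h0 : ENNReal.ofReal (∏ v ∈ verts F' \ verts F, weight a b c (localConf ξ v)) ≠ 0 := by
    simp [e4]
  refine (ENNReal.mul_right_inj h0 ENNReal.ofReal_ne_top).1 ?_
  rw [WW, WW, mul_left_comm, h, mul_left_comm]
end

lemma measurable_cyl (S : Set HexE) (σ : Config) : MeasurableSet (cyl S σ) := by
  have : cyl S σ = ⋂ e ∈ S, (fun ω : Config => ω e) ⁻¹' {σ e} := by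
    ext ω; simp [cyl]
  rw [this]
  exact MeasurableSet.biInter S.to_countable fun e _ => measurable_pi_apply e (by trivial)

lemma measurable_patch (F : Finset HexE) (ρ : Config) : Measurable (patch F ρ) := by
  refine measurable_pi_lambda _ fun e => ?_
  by_cases h : e ∈ F
  · simp [patch, h]
  · simpa [patch, h] using measurable_pi_apply e

lemma cyl_set_finite {S : Set HexE} (hS : S.Finite) : {A | ∃ σ, A = cyl S σ}.Finite := by
  have : Finite S := hS
  refine Set.Finite.subset (Set.finite_range fun f : S → Bool => {ω : Config | ∀ e : S, ω e = f e}) ?_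
  rintro A ⟨σ, rfl⟩
  refine ⟨fun e => σ e, ?_⟩
  ext ω
  simp [cyl]

lemma measurable_isConfig : MeasurableSet {ω : Config | IsConfig ω} := by
  have : {ω : Config | IsConfig ω} = ⋂ v : HexV, (fun ω : Config => localConf ω v) ⁻¹'
      {f | 1 ≤ (Finset.univ.filter fun i : Fin 3 => f i = true).card ∧
        (Finset.univ.filter fun i : Fin 3 => f i = true).card ≤ 2} := by
    ext ω; simp [IsConfig]
  rw [this]
  refine MeasurableSet.iInter fun v => ?_
  have hm : Measurable (fun ω : Config => localConf ω v) :=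
    measurable_pi_lambda _ fun i => measurable_pi_apply (edgesAt v i)
  exact hm (Set.toFinite _).measurableSet

def piC (F : Finset HexE) : Set (Set Config) := {A | ∃ F', F ⊆ F' ∧ ∃ ζ, A = cyl (HH F') ζ}

lemma piC_pi (F : Finset HexE) : IsPiSystem (piC F) := by
  classical
  rintro _ ⟨F1, h1, ζ1, rfl⟩ _ ⟨F2, h2, ζ2, rfl⟩ ⟨ω, hω1, hω2⟩
  refine ⟨F1 ∪ F2, h1.trans Finset.subset_union_left, ω, ?_⟩
  rw [← cyl_eq hω1, ← cyl_eq hω2, HH_union]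
  ext ξ
  simp only [cyl, Set.mem_inter_iff, Set.mem_ofPred_eq, Set.mem_union]
  constructor
  · rintro ⟨ha, hb⟩ e (h | h)
    · exact ha e h
    · exact hb e h
  · exact fun h => ⟨fun e he => h e (Or.inl he), fun e he => h e (Or.inr he)⟩

lemma piC_gen (F : Finset HexE) :
    (MeasurableSpace.pi : MeasurableSpace Config) = MeasurableSpace.generateFrom (piC F) := by
  classical
  apply le_antisymm
  · refine iSup_le fun e => ?_
    rw [← measurable_iff_comap_le]
    refine @measurable_to_bool _ (MeasurableSpace.generateFrom (piC F)) _ ?_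
    have : (fun ω : Config => ω e) ⁻¹' {true} =
        ⋃₀ {A | (∃ σ, A = cyl (HH (insert e F)) σ) ∧ A ⊆ (fun ω : Config => ω e) ⁻¹' {true}} := by
      ext ω
      simp only [Set.mem_sUnion]
      constructor
      · intro h
        refine ⟨cyl (HH (insert e F)) ω, ⟨⟨ω, rfl⟩, fun ξ hξ => ?_⟩, fun _ _ => rfl⟩
        have := hξ e (Or.inl (by simp))
        simpa [this] using h
      · rintro ⟨A, ⟨-, hA⟩, h⟩
        exact hA h
    rw [this]
    refine @MeasurableSet.sUnion _ (MeasurableSpace.generateFrom (piC F)) _ ?_ ?_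
    · exact ((cyl_set_finite (HH_finite _)).subset fun A hA => hA.1).countable
    · rintro A ⟨⟨σ, rfl⟩, -⟩
      exact MeasurableSpace.measurableSet_generateFrom ⟨_, Finset.subset_insert _ _, σ, rfl⟩
  · refine MeasurableSpace.generateFrom_le ?_
    rintro _ ⟨F', -, ζ, rfl⟩
    exact measurable_cyl _ _

section

lemma ae_isConfig {a b c : ℝ} {μ : Measure Config} (hG : IsGibbs a b c μ) : ∀ᵐ ω ∂μ, IsConfig ω := by
  have := hG.1
  exact (prob_compl_eq_zero_iff measurable_isConfig).2 hG.2.1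

lemma gibbs_map {a b c : ℝ} (ha : 0 < a) (hb : 0 < b) (hc : 0 < c) {μ : Measure Config}
    (hG : IsGibbs a b c μ) {F : Finset HexE} {σ τ : Config} (hσ : IsConfig σ) (hτ : IsConfig τ)
    (hoff : ∀ e ∉ F, σ e = τ e) :
    WW a b c F τ • (μ.restrict (cyl (HH F) σ)).map (patch F τ) =
      WW a b c F σ • μ.restrict (cyl (HH F) τ) := by
  have := hG.1
  have hpt : patch F τ σ = τ := by
    funext e; simp only [patch]; split_ifs with h
    · rfl
    · exact hoff e h
  have : IsFiniteMeasure (WW a b c F τ • (μ.restrict (cyl (HH F) σ)).map (patch F τ)) :=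
    ⟨by
      rw [Measure.smul_apply, smul_eq_mul]
      exact ENNReal.mul_lt_top ENNReal.ofReal_lt_top (measure_lt_top _ _)⟩
  refine ext_of_generate_finite (piC F) (piC_gen F) (piC_pi F) ?_ ?_
  · rintro _ ⟨F', hF', ζ, rfl⟩
    rw [Measure.smul_apply, Measure.smul_apply, smul_eq_mul, smul_eq_mul,
      Measure.map_apply (measurable_patch _ _) (measurable_cyl _ _),
      Measure.restrict_apply (measurable_patch _ _ (measurable_cyl _ _)),
      Measure.restrict_apply (measurable_cyl _ _), mul_comm, mul_comm (WW a b c F σ)]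
    by_cases hex : ∃ ξ, IsConfig ξ ∧ ξ ∈ patch F τ ⁻¹' cyl (HH F') ζ ∩ cyl (HH F) σ
    · obtain ⟨ξ, hξ, h1, h2⟩ := hex
      have h1' : patch F τ ξ ∈ cyl (HH F') ζ := h1
      have h3 : patch F τ ξ ∈ cyl (HH F) τ := by
        intro e he
        simp only [patch]
        split_ifs with hF
        · rfl
        · rw [h2 e he, hoff e hF]
      have E1 : patch F τ ⁻¹' cyl (HH F') ζ ∩ cyl (HH F) σ = cyl (HH F') ξ := by
        rw [← cyl_eq h1', ← cyl_eq h2]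
        ext ω
        constructor
        · rintro ⟨ha, hb⟩ e he
          by_cases hF : e ∈ F
          · exact hb e (Or.inl hF)
          · have := ha e he
            simpa only [patch, if_neg hF] using this
        · intro h
          refine ⟨fun e he => ?_, fun e he => h e (HH_mono hF' he)⟩
          simp only [patch]
          rw [h e he]
      have E2 : cyl (HH F') ζ ∩ cyl (HH F) τ = cyl (HH F') (patch F τ ξ) := by
        rw [← cyl_eq h1', ← cyl_eq h3]
        ext ω
        exact ⟨fun h => h.1, fun h => ⟨h, fun e he => h e (HH_mono hF' he)⟩⟩
      rw [E1, E2]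
      exact gibbs_cyl ha hb hc hG hF' hτ hoff hξ h2
    · have z1 : μ (patch F τ ⁻¹' cyl (HH F') ζ ∩ cyl (HH F) σ) = 0 :=
        measure_mono_null (fun ω hω hcf => hex ⟨ω, hcf, hω⟩) (ae_isConfig hG)
      have z2 : μ (cyl (HH F') ζ ∩ cyl (HH F) τ) = 0 := by
        have hnull : μ {ω | ¬ IsConfig ω} = 0 := ae_isConfig hG
        refine measure_mono_null (t := {ω | ¬ IsConfig ω}) (fun ω hω => ?_) hnull
        intro hcf
        refine hex ⟨patch F σ ω, ?_, ?_, ?_⟩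
        · exact patch_isConfig hω.2 (fun e he => (hoff e he).symm) hσ hcf
        · intro e he
          rw [← hω.1 e he]
          simp only [patch]
          split_ifs with hF
          · exact (hω.2 e (Or.inl hF)).symm
          · rfl
        · intro e he
          simp only [patch]
          split_ifs with hF
          · rfl
          · rw [hω.2 e he, hoff e hF]
      rw [z1, z2]; simp
  · rw [Measure.smul_apply, Measure.smul_apply, smul_eq_mul, smul_eq_mul,
      Measure.map_apply (measurable_patch _ _) MeasurableSet.univ, Set.preimage_univ,
      Measure.restrict_apply_univ, Measure.restrict_apply_univ, mul_comm,
      mul_comm (WW a b c F σ)]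
    have := gibbs_cyl ha hb hc hG (Finset.Subset.refl F) hτ hoff hσ (fun _ _ => rfl)
    rwa [hpt] at this

lemma finite_energy {a b c : ℝ} (ha : 0 < a) (hb : 0 < b) (hc : 0 < c) {μ : Measure Config}
    (hG : IsGibbs a b c μ) (F : Finset HexE) (ρ : Config) : ∃ k : ENNReal, k ≠ ⊤ ∧
    ∀ B, MeasurableSet B →
      μ {ω | IsConfig ω ∧ IsConfig (patch F ρ ω) ∧ patch F ρ ω ∈ B} ≤ k * μ B := by
  have step : ∀ A : Set Config, ∃ k : ENNReal, k ≠ ⊤ ∧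
      ((∃ σ, IsConfig σ ∧ IsConfig (patch F ρ σ) ∧ A = cyl (HH F) σ) →
      ∀ B, MeasurableSet B → μ (A ∩ patch F ρ ⁻¹' B) ≤ k * μ B) := by
    intro A
    by_cases h : ∃ σ, IsConfig σ ∧ IsConfig (patch F ρ σ) ∧ A = cyl (HH F) σ
    · obtain ⟨σ, hσ, hτ, rfl⟩ := h
      set τ := patch F ρ σ with hτdef
      have hW := WW_ne_zero ha hb hc F hτ
      refine ⟨WW a b c F σ / WW a b c F τ, ENNReal.div_ne_top ENNReal.ofReal_ne_top hW, fun _ B hB => ?_⟩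
      have hpp : patch F ρ = patch F τ := by
        funext ω e; simp only [patch, hτdef]; split_ifs <;> rfl
      have hm := congrArg (fun m => m B) (gibbs_map ha hb hc hG hσ hτ (fun e he => by
        simp only [hτdef, patch]; rw [if_neg he]))
      simp only [Measure.smul_apply, smul_eq_mul] at hm
      rw [Measure.map_apply (measurable_patch _ _) hB,
        Measure.restrict_apply (measurable_patch _ _ hB), Measure.restrict_apply hB,
        Set.inter_comm] at hm
      rw [hpp, mul_comm, ← mul_div_assoc, ENNReal.le_div_iff_mul_le (Or.inl hW)
        (Or.inl ENNReal.ofReal_ne_top), mul_comm, hm, mul_comm]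
      gcongr
      exact Set.inter_subset_left
    · exact ⟨0, by simp, fun h' => absurd h' h⟩
  choose k hk hk' using step
  have hfin : {A | ∃ σ, IsConfig σ ∧ IsConfig (patch F ρ σ) ∧ A = cyl (HH F) σ}.Finite :=
    (cyl_set_finite (HH_finite F)).subset fun A ⟨σ, _, _, h⟩ => ⟨σ, h⟩
  refine ⟨∑ A ∈ hfin.toFinset, k A, ?_, fun B hB => ?_⟩
  · exact (ENNReal.sum_lt_top.2 fun A _ => (hk A).lt_top).ne
  · calc μ {ω | IsConfig ω ∧ IsConfig (patch F ρ ω) ∧ patch F ρ ω ∈ B}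
        ≤ μ (⋃ A ∈ hfin.toFinset, A ∩ patch F ρ ⁻¹' B) := by
          apply measure_mono
          rintro ω ⟨h1, h2, h3⟩
          simp only [Set.mem_iUnion]
          exact ⟨cyl (HH F) ω, by rw [Set.Finite.mem_toFinset]; exact ⟨ω, h1, h2, rfl⟩,
            fun _ _ => rfl, h3⟩
      _ ≤ ∑ A ∈ hfin.toFinset, μ (A ∩ patch F ρ ⁻¹' B) := measure_biUnion_finset_le _ _
      _ ≤ ∑ A ∈ hfin.toFinset, k A * μ B :=
          Finset.sum_le_sum fun A hA => hk' A (by simpa using hA) B hB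
      _ = _ := by rw [Finset.sum_mul]
end


lemma infinite_iff_finset {α : Type*} (s : Set α) :
    s.Infinite ↔ ∀ F : Finset α, ∃ v, v ∉ F ∧ v ∈ s := by
  constructor
  · intro h F
    obtain ⟨v, hv, hF⟩ := h.exists_notMem_finset F
    exact ⟨v, hF, hv⟩
  · intro h hf
    obtain ⟨v, hv, hs⟩ := h hf.toFinset
    exact hv (hf.mem_toFinset.2 hs)

def reachN (S : Set HexV) : ℕ → HexV → HexV → Prop
  | 0, u, v => u = v
  | n + 1, u, v => ∃ w, reachN S n u w ∧ adjIn S w v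

lemma reach_iff_reachN (S : Set HexV) (u v : HexV) : Reach S u v ↔ ∃ n, reachN S n u v := by
  constructor
  · intro h
    induction h with
    | refl => exact ⟨0, rfl⟩
    | tail _ hab ih => obtain ⟨n, hn⟩ := ih; exact ⟨n + 1, _, hn, hab⟩
  · rintro ⟨n, hn⟩
    induction n generalizing v with
    | zero => rw [show u = v from hn]
    | succ n ih => obtain ⟨w, hw, ha⟩ := hn; exact (ih w hw).tail ha

section
variable {S : Config → Set HexV}

lemma meas_adjIn (hS : ∀ v, Measurable fun ω => v ∈ S ω) (u v : HexV) :
    Measurable fun ω => adjIn (S ω) u v :=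
  measurable_const.and ((hS u).and (hS v))

lemma meas_reachN (hS : ∀ v, Measurable fun ω => v ∈ S ω) (n : ℕ) (u v : HexV) :
    Measurable fun ω => reachN (S ω) n u v := by
  induction n generalizing v with
  | zero => exact measurable_const
  | succ n ih => exact Measurable.exists fun w => (ih w).and (meas_adjIn hS w v)

lemma meas_reach (hS : ∀ v, Measurable fun ω => v ∈ S ω) (u v : HexV) :
    Measurable fun ω => Reach (S ω) u v := by
  simp only [reach_iff_reachN]
  exact Measurable.exists fun n => meas_reachN hS n u v

lemma meas_inf (hS : ∀ v, Measurable fun ω => v ∈ S ω) (u : HexV) :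
    Measurable fun ω => (compOf (S ω) u).Infinite := by
  simp only [infinite_iff_finset]
  exact Measurable.forall fun F => Measurable.exists fun v =>
    measurable_const.and (meas_reach hS u v)

lemma meas_trif {K : Config → Set HexV} (hS : ∀ v, Measurable fun ω => v ∈ S ω)
    (hK : ∀ v, Measurable fun ω => v ∈ K ω) : MeasurableSet {ω | IsTrif (S ω) (K ω)} := by
  have hSK : ∀ v, Measurable fun ω => v ∈ S ω \ K ω := fun v => (hS v).and (hK v).not
  refine measurableSet_setOfPred.2 ?_
  unfold IsTrif
  refine Measurable.and (Measurable.forall fun v => (hK v).imp (hS v)) (Measurable.and ?_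
    (Measurable.and (Measurable.exists fun v => hK v) ?_))
  · exact Measurable.forall fun u => (hK u).imp (Measurable.forall fun v => (hK v).imp
      (meas_reach hK u v))
  · refine Measurable.exists fun p => Measurable.exists fun q => Measurable.exists fun r => ?_
    refine Measurable.and ?_ ((meas_reach hSK _ _).not.and ((meas_reach hSK _ _).not.and
      (meas_reach hSK _ _).not))
    exact Measurable.forall fun z => measurable_const.imp ((hSK z).and
      ((Measurable.exists fun k => (hK k).and measurable_const).and (meas_inf hSK z)))
end

lemma meas_alive (v : HexV) : Measurable fun ω : Config => v ∈ alive ω := by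
  have : ∀ ω : Config, v ∈ alive ω ↔ ∀ i, ω (edgesAt v i) = conf001 i := fun ω => funext_iff
  simp only [this]
  refine Measurable.forall fun i => ?_
  exact measurableSet_setOfPred.1
    (measurableSet_eq_fun (measurable_pi_apply (edgesAt v i)) measurable_const)

lemma meas_Kset (x0 x1 y0 y1 : ℤ) (v : HexV) :
    Measurable fun ω : Config => v ∈ Kset x0 x1 y0 y1 ω :=
  measurable_const.and (meas_alive v)

lemma meas_TwoInf : MeasurableSet {ω | TwoInf ω} := by
  refine measurableSet_setOfPred.2 ?_
  unfold TwoInf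
  exact Measurable.exists fun v => Measurable.exists fun w => (meas_alive v).and
    ((meas_alive w).and ((meas_inf meas_alive v).and ((meas_inf meas_alive w).and
      (meas_reach meas_alive v w).not)))

def TT (x0 x1 y0 y1 : ℤ) : Set Config := {ω | IsTrif (alive ω) (Kset x0 x1 y0 y1 ω)}

lemma meas_TT (x0 x1 y0 y1 : ℤ) : MeasurableSet (TT x0 x1 y0 y1) :=
  meas_trif meas_alive (meas_Kset x0 x1 y0 y1)

/-- translation -/
def tv (g : ℤ × ℤ) (v : HexV) : HexV := (v.1 + g.1, v.2.1 + g.2, v.2.2)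

lemma tv_neg (g : ℤ × ℤ) (v : HexV) : tv g (tv (-g) v) = v := by simp [tv]
lemma tv_neg' (g : ℤ × ℤ) (v : HexV) : tv (-g) (tv g v) = v := by simp [tv]

lemma tv_inj (g : ℤ × ℤ) {v w : HexV} (h : tv g v = tv g w) : v = w := by
  rw [← tv_neg' g v, h, tv_neg']

lemma tv_adj (g : ℤ × ℤ) (v w : HexV) : HexAdj (tv g v) (tv g w) ↔ HexAdj v w := by
  obtain ⟨x, y, s⟩ := v
  obtain ⟨x', y', t⟩ := w
  simp only [tv, hexAdj_iff]
  grind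

lemma tv_alive (g : ℤ × ℤ) (ω : Config) : alive (shiftConfig g ω) = tv g ⁻¹' alive ω := by
  ext ⟨x, y, t⟩
  have : localConf (shiftConfig g ω) (x, y, t) = localConf ω (tv g (x, y, t)) := by
    funext i
    cases t <;> fin_cases i <;> simp [localConf, shiftConfig, shiftE, edgesAt, tv] <;> congr 2 <;> ring_nf
  simp only [alive, confSet, Set.mem_preimage, Set.mem_ofPred_eq, this]

lemma tv_reach1 (g : ℤ × ℤ) {S : Set HexV} {u v : HexV} (h : Reach S u v) :
    Reach (tv (-g) ⁻¹' S) (tv g u) (tv g v) := by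
  refine Relation.ReflTransGen.lift (tv g) (fun a b hab => ?_) _ _ h
  exact ⟨(tv_adj g a b).2 hab.1, by simpa [tv_neg'] using hab.2.1, by simpa [tv_neg'] using hab.2.2⟩

lemma pre_pre (g : ℤ × ℤ) (S : Set HexV) : tv (-g) ⁻¹' (tv g ⁻¹' S) = S := by
  ext v; simp [tv_neg]

lemma tv_reach (g : ℤ × ℤ) (S : Set HexV) (u v : HexV) :
    Reach (tv g ⁻¹' S) u v ↔ Reach S (tv g u) (tv g v) := by
  constructor
  · intro h
    have := tv_reach1 g h
    rwa [pre_pre] at this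
  · intro h
    have := tv_reach1 (-g) h
    rwa [neg_neg, tv_neg', tv_neg'] at this

lemma tv_comp_inf (g : ℤ × ℤ) (S : Set HexV) (u : HexV) (h : (compOf S (tv g u)).Infinite) :
    (compOf (tv g ⁻¹' S) u).Infinite := by
  have : compOf (tv g ⁻¹' S) u = tv g ⁻¹' compOf S (tv g u) := by
    ext v; exact tv_reach g S u v
  rw [this]
  refine h.preimage ?_
  intro v _
  exact ⟨tv (-g) v, tv_neg g v⟩

lemma tv_trif (g : ℤ × ℤ) {S K : Set HexV} (h : IsTrif S K) :
    IsTrif (tv g ⁻¹' S) (tv g ⁻¹' K) := by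
  obtain ⟨h1, h2, ⟨k, hk⟩, p, q, r, h3, h4, h5, h6⟩ := h
  have hr : ∀ p q, ¬ Reach (S \ K) p q →
      ¬ Reach (tv g ⁻¹' S \ tv g ⁻¹' K) (tv (-g) p) (tv (-g) q) := by
    intro p q hpq hh
    have := (tv_reach g (S \ K) _ _).1 hh
    rw [tv_neg, tv_neg] at this
    exact hpq this
  refine ⟨fun v hv => h1 hv, fun u hu v hv => (tv_reach g K u v).2 (h2 _ hu _ hv),
    ⟨tv (-g) k, by simpa [tv_neg] using hk⟩, tv (-g) p, tv (-g) q, tv (-g) r, ?_,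
    hr _ _ h4, hr _ _ h5, hr _ _ h6⟩
  intro z hz
  obtain ⟨a1, ⟨k', hk', ha⟩, a3⟩ := h3 (tv g z) (by
    rcases hz with rfl | rfl | rfl <;> simp [tv_neg])
  refine ⟨a1, ⟨tv (-g) k', by simpa [tv_neg] using hk', ?_⟩, ?_⟩
  · rw [← tv_adj g, tv_neg]; exact ha
  · exact tv_comp_inf g (S \ K) z a3

lemma TwoInf_shift1 (g : ℤ × ℤ) {ω : Config} (h : TwoInf ω) : TwoInf (shiftConfig g ω) := by
  obtain ⟨v, w, hv, hw, hvi, hwi, hn⟩ := h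
  refine ⟨tv (-g) v, tv (-g) w, ?_, ?_, ?_, ?_, ?_⟩ <;> rw [tv_alive]
  · simpa [tv_neg] using hv
  · simpa [tv_neg] using hw
  · exact tv_comp_inf _ _ _ (by rwa [tv_neg])
  · exact tv_comp_inf _ _ _ (by rwa [tv_neg])
  · rwa [tv_reach, tv_neg, tv_neg]

lemma shift_shift (g h : ℤ × ℤ) (ω : Config) :
    shiftConfig g (shiftConfig h ω) = shiftConfig (g + h) ω := by
  funext e; simp [shiftConfig, shiftE, add_assoc]

lemma shift_zero (ω : Config) : shiftConfig 0 ω = ω := by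
  funext e; simp [shiftConfig, shiftE]

lemma TwoInf_shift (g : ℤ × ℤ) (ω : Config) : TwoInf (shiftConfig g ω) ↔ TwoInf ω := by
  refine ⟨fun h => ?_, TwoInf_shift1 g⟩
  have := TwoInf_shift1 (-g) h
  rwa [shift_shift, neg_add_cancel, shift_zero] at this

lemma meas_shift (g : ℤ × ℤ) : Measurable (shiftConfig g) :=
  measurable_pi_lambda _ fun e => measurable_pi_apply (shiftE g e)

lemma mp_shift {μ : Measure Config} (hTI : TransInvariant μ) (g : ℤ × ℤ) :
    MeasurePreserving (shiftConfig g) μ μ := ⟨meas_shift g, hTI g⟩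


lemma bk_count {x0 x1 y0 y1 W : ℤ} (hW : 0 < W) (hx : x1 - x0 < W) (hy : y1 - y0 < W) (n : ℕ)
    (ω : Config) (G : Finset (ℕ × ℕ)) (hG : ∀ p ∈ G, p.1 < n ∧ p.2 < n)
    (hT : ∀ p ∈ G, shiftConfig (W * (p.1 : ℤ), W * (p.2 : ℤ)) ω ∈ TT x0 x1 y0 y1) :
    (G.card : ℤ) ≤ 8 * (W * n + 3) := by
  classical
  set KK : ℕ × ℕ → Set HexV := fun p => tv (-(W * (p.1 : ℤ), W * (p.2 : ℤ))) ⁻¹'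
    Kset x0 x1 y0 y1 (shiftConfig (W * (p.1 : ℤ), W * (p.2 : ℤ)) ω) with hKK
  have htr : ∀ p ∈ G, IsTrif (alive ω) (KK p) := by
    intro p hp
    have := tv_trif (-(W * (p.1 : ℤ), W * (p.2 : ℤ))) (hT p hp)
    rwa [tv_alive, pre_pre] at this
  have hsub : ∀ p, ∀ v ∈ KK p, (x0 + W * p.1 ≤ v.1 ∧ v.1 ≤ x1 + W * p.1) ∧
      (y0 + W * p.2 ≤ v.2.1 ∧ v.2.1 ≤ y1 + W * p.2) := by
    intro p v hv
    have h := rectK_sub _ _ _ _ hv.1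
    simp only [rectU, tv, Set.mem_ofPred_eq, Prod.neg_mk] at h
    omega
  have hlt : ∀ i j : ℕ, i < j → W * (i : ℤ) + W ≤ W * (j : ℤ) := by
    intro i j hij
    have : (i : ℤ) + 1 ≤ j := by exact_mod_cast hij
    nlinarith
  have hdis : ∀ p q, p ≠ q → Disjoint (KK p) (KK q) := by
    intro p q hpq
    rw [Set.disjoint_left]
    intro v hp hq
    have h1 := hsub p v hp
    have h2 := hsub q v hq
    apply hpq
    rcases lt_trichotomy p.1 q.1 with h | h | h
    · have := hlt _ _ h; omega
    · rcases lt_trichotomy p.2 q.2 with h' | h' | h'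
      · have := hlt _ _ h'; omega
      · exact Prod.ext h h'
      · have := hlt _ _ h'; omega
    · have := hlt _ _ h; omega
  have hinj : Set.InjOn KK G := by
    intro p hp q hq hpq
    by_contra hne
    have h1 := hdis p q hne
    rw [← hpq] at h1
    exact (htr p hp).2.2.1.ne_empty (by simpa using h1)
  set B : Finset (ℤ × ℤ × Bool) := (({x0 - 1, x0 + W * n + 1} : Finset ℤ) ×ˢ
      (Finset.Icc (y0 - 1) (y0 + W * n + 1) ×ˢ (Finset.univ : Finset Bool))) ∪
      (Finset.Icc (x0 - 1) (x0 + W * n + 1) ×ˢ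
        (({y0 - 1, y0 + W * n + 1} : Finset ℤ) ×ˢ (Finset.univ : Finset Bool))) with hB
  have hWn : 0 ≤ W * (n : ℤ) := by positivity
  have hBc : (B.card : ℤ) ≤ 8 * (W * n + 3) := by
    have e1 := Finset.card_union_le (({x0 - 1, x0 + W * n + 1} : Finset ℤ) ×ˢ
      (Finset.Icc (y0 - 1) (y0 + W * n + 1) ×ˢ (Finset.univ : Finset Bool)))
      (Finset.Icc (x0 - 1) (x0 + W * n + 1) ×ˢ
        (({y0 - 1, y0 + W * n + 1} : Finset ℤ) ×ˢ (Finset.univ : Finset Bool)))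
    rw [← hB] at e1
    simp only [Finset.card_product, Int.card_Icc, Finset.card_univ, Fintype.card_bool] at e1
    have e2 : ({x0 - 1, x0 + W * n + 1} : Finset ℤ).card ≤ 2 := Finset.card_le_two
    have e3 : ({y0 - 1, y0 + W * n + 1} : Finset ℤ).card ≤ 2 := Finset.card_le_two
    have e4 : ((y0 + W * n + 1 + 1 - (y0 - 1)).toNat : ℤ) = W * n + 3 := by
      rw [Int.toNat_of_nonneg] <;> omega
    have e5 : ((x0 + W * n + 1 + 1 - (x0 - 1)).toNat : ℤ) = W * n + 3 := by
      rw [Int.toNat_of_nonneg] <;> omega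
    zify at e1 e2 e3
    rw [e4, e5] at e1
    nlinarith
  have hle := burton_keane_count (rectU x0 (x0 + W * n) y0 (y0 + W * n)) (B : Set HexV)
    (rectU_finite _ _ _ _) B.finite_toSet (by
      intro v hv w hvw
      have hb := hexAdj_bound hvw
      by_cases hw : w ∈ rectU x0 (x0 + W * n) y0 (y0 + W * n)
      · exact Or.inl hw
      · right
        obtain ⟨x, y, t⟩ := v
        obtain ⟨x', y', t'⟩ := w
        simp only [rectU, Set.mem_ofPred_eq, not_and, not_le] at hv hw hb
        simp only [hB, Finset.coe_union, Set.mem_union, Finset.mem_coe, Finset.mem_product,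
          Finset.mem_insert, Finset.mem_singleton, Finset.mem_Icc, Finset.mem_univ, and_true]
        grind)
    (G.image KK).card (alive ω) (G.image KK) rfl
    (by
      intro K hK K' hK' hne
      obtain ⟨p, hp, rfl⟩ := Finset.mem_image.1 hK
      obtain ⟨q, hq, rfl⟩ := Finset.mem_image.1 hK'
      exact hdis p q fun h => hne (by rw [h]))
    (by
      intro K hK
      obtain ⟨p, hp, rfl⟩ := Finset.mem_image.1 hK
      exact htr p hp)
    (by
      intro K hK
      obtain ⟨p, hp, rfl⟩ := Finset.mem_image.1 hK
      intro v hv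
      have h := hsub p v hv
      have h1 := hlt _ _ (hG p hp).1
      have h2 := hlt _ _ (hG p hp).2
      have h3 : 0 ≤ W * (p.1 : ℤ) := by positivity
      have h4 : 0 ≤ W * (p.2 : ℤ) := by positivity
      show (_ ∧ _) ∧ (_ ∧ _)
      omega)
  rw [Finset.card_image_of_injOn hinj] at hle
  have h2 : ((B : Set HexV) ∩ alive ω).ncard ≤ B.card := by
    rw [← Set.ncard_coe_finset]
    exact Set.ncard_le_ncard Set.inter_subset_left B.finite_toSet
  have : (G.card : ℤ) ≤ B.card := by exact_mod_cast hle.trans h2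
  exact this.trans hBc

lemma TT_null {μ : Measure Config} [IsProbabilityMeasure μ] (hTI : TransInvariant μ)
    (x0 x1 y0 y1 : ℤ) : μ (TT x0 x1 y0 y1) = 0 := by
  classical
  set W : ℤ := max 1 (max (x1 - x0 + 1) (y1 - y0 + 1)) with hWd
  have hW : 0 < W := by omega
  have hx : x1 - x0 < W := by omega
  have hy : y1 - y0 < W := by omega
  have key : ∀ n : ℕ, (n : ENNReal) * n * μ (TT x0 x1 y0 y1) ≤ ((8 * (W * n + 3)).toNat : ENNReal) := by
    intro n
    set I := Finset.range n ×ˢ Finset.range n with hI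
    set A : ℕ × ℕ → Set Config := fun p =>
      shiftConfig (W * (p.1 : ℤ), W * (p.2 : ℤ)) ⁻¹' TT x0 x1 y0 y1 with hA
    have hmA : ∀ p, MeasurableSet (A p) := fun p => meas_shift _ (meas_TT _ _ _ _)
    have hμA : ∀ p, μ (A p) = μ (TT x0 x1 y0 y1) := fun p =>
      (mp_shift hTI _).measure_preimage (meas_TT _ _ _ _).nullMeasurableSet
    calc (n : ENNReal) * n * μ (TT x0 x1 y0 y1) = ∑ p ∈ I, μ (A p) := by
          simp [hμA, hI]
      _ = ∫⁻ ω, ∑ p ∈ I, (A p).indicator 1 ω ∂μ := by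
          rw [lintegral_finsetSum]
          · simp [lintegral_indicator_one (hmA _)]
          · intro p _; exact measurable_one.indicator (hmA p)
      _ ≤ ∫⁻ ω, ((8 * (W * n + 3)).toNat : ENNReal) ∂μ := by
          refine lintegral_mono fun ω => ?_
          have h1 : ∑ p ∈ I, (A p).indicator (1 : Config → ENNReal) ω
              = ((I.filter fun p => ω ∈ A p).card : ENNReal) := by
            simp [Set.indicator_apply]
          show ∑ p ∈ I, (A p).indicator (1 : Config → ENNReal) ω ≤ _
          rw [h1]
          have h2 := bk_count hW hx hy n ω (I.filter fun p => ω ∈ A p)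
            (by intro p hp; simpa [hI] using (Finset.mem_filter.1 hp).1)
            (by intro p hp; exact (Finset.mem_filter.1 hp).2)
          have h3 : (I.filter fun p => ω ∈ A p).card ≤ (8 * (W * n + 3)).toNat := by omega
          exact_mod_cast h3
      _ = _ := by simp
  by_contra hne
  set t := (μ (TT x0 x1 y0 y1)).toReal with ht
  have htpos : 0 < t := ENNReal.toReal_pos hne (measure_ne_top _ _)
  obtain ⟨n, hn⟩ := exists_nat_gt ((8 * W + 24 : ℝ) / t)
  have hWr : (0 : ℝ) < W := by exact_mod_cast hW
  have hn0 : 0 < (n : ℝ) := lt_trans (by positivity) hn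
  have hn1 : (1 : ℝ) ≤ n := by exact_mod_cast Nat.cast_pos.1 hn0
  have h := ENNReal.toReal_mono (by simp) (key n)
  simp only [ENNReal.toReal_mul, ENNReal.toReal_natCast, ← ht] at h
  have h' : (((8 * (W * n + 3)).toNat : ℕ) : ℝ) = 8 * (W * n + 3) := by
    have : (((8 * (W * n + 3)).toNat : ℕ) : ℤ) = 8 * (W * n + 3) :=
      Int.toNat_of_nonneg (by positivity)
    exact_mod_cast this
  rw [h'] at h
  rw [div_lt_iff₀ htpos] at hn
  nlinarith


def Recur (ω : Config) : Prop := ∀ (s : Bool) (v : HexV), v ∈ alive ω → ∀ N : ℕ, ∃ n, N ≤ n ∧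
  tv ((if s then (n : ℤ) else -n), (if s then (n : ℤ) else -n)) v ∈ alive ω

lemma shift_iter (g : ℤ × ℤ) (n : ℕ) (ω : Config) :
    (shiftConfig g)^[n] ω = shiftConfig (n • g) ω := by
  induction n with
  | zero => simp [shift_zero]
  | succ n ih => rw [Function.iterate_succ_apply', ih, shift_shift, succ_nsmul']

lemma ae_recur {μ : Measure Config} [IsProbabilityMeasure μ] (hTI : TransInvariant μ) :
    ∀ᵐ ω ∂μ, Recur ω := by
  unfold Recur
  rw [ae_all_iff]; intro s
  rw [ae_all_iff]; intro v
  have hc := (mp_shift hTI (if s then ((1 : ℤ), (1 : ℤ)) else (-1, -1))).conservative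
  have hm : MeasurableSet {ω : Config | v ∈ alive ω} := measurableSet_setOfPred.2 (meas_alive v)
  filter_upwards [hc.ae_mem_imp_frequently_image_mem hm.nullMeasurableSet] with ω hω hv N
  obtain ⟨n, hn, h⟩ := Filter.frequently_atTop.1 (hω hv) N
  refine ⟨n, hn, ?_⟩
  rw [shift_iter] at h
  change v ∈ alive _ at h
  rw [tv_alive] at h
  cases s <;> simpa using h

lemma rect_exists {ω : Config} (hR : Recur ω) {v : HexV} (hv : v ∈ alive ω)
    (hi : (compOf (alive ω) v).Infinite) (M : ℕ) : ∃ x0 x1 y0 y1 : ℤ,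
      x0 < -M ∧ M < x1 ∧ y0 < -M ∧ M < y1 ∧ (x1, y1, true) ∈ alive ω ∧ (x0, y0, false) ∈ alive ω := by
  have hw : ∃ w, HexAdj v w ∧ w ∈ alive ω := by
    by_contra hno
    push Not at hno
    refine hi ((Set.finite_singleton v).subset fun w hw => ?_)
    rcases Relation.ReflTransGen.cases_head hw with h | ⟨u, hu, _⟩
    · exact h.symm
    · exact absurd hu.2.2 (hno u hu.1)
  obtain ⟨w, hvw, hw⟩ := hw
  have htb : ∃ x y x' y' : ℤ, (x, y, true) ∈ alive ω ∧ (x', y', false) ∈ alive ω := by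
    obtain ⟨x, y, s⟩ := v
    obtain ⟨x', y', t⟩ := w
    rw [hexAdj_iff] at hvw
    cases s <;> cases t
    · simp at hvw
    · exact ⟨x', y', x, y, hw, hv⟩
    · exact ⟨x, y, x', y', hv, hw⟩
    · simp at hvw
  obtain ⟨x, y, x', y', ht, hb⟩ := htb
  obtain ⟨n, hn, h1⟩ := hR true _ ht (M + x.natAbs + y.natAbs + 1)
  obtain ⟨m, hm, h2⟩ := hR false _ hb (M + x'.natAbs + y'.natAbs + 1)
  simp only [tv, if_true] at h1
  simp only [tv, Bool.false_eq_true, if_false] at h2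
  exact ⟨_, _, _, _, by omega, by omega, by omega, by omega, h1, h2⟩

lemma mem_rectK_of {x0 x1 y0 y1 : ℤ} {M : ℕ} (h : x0 < -M ∧ M < x1 ∧ y0 < -M ∧ M < y1)
    {z : HexV} (hz : z.1.natAbs + z.2.1.natAbs ≤ M) : z ∈ rectK x0 x1 y0 y1 := by
  show (_ ∧ _) ∧ (_ ∧ _) ∧ ¬ (_ ∧ _) ∧ ¬ (_ ∧ _)
  omega

lemma ThreeInf_null {a b c : ℝ} (ha : 0 < a) (hb : 0 < b) (hc : 0 < c) {μ : Measure Config}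
    (hG : IsGibbs a b c μ) (hTI : TransInvariant μ) : ∀ᵐ ω ∂μ, ¬ ThreeInf ω := by
  have := hG.1
  have hnull : ∀ R : ℤ × ℤ × ℤ × ℤ, ∀ᵐ ω ∂μ, ¬ (IsConfig ω ∧
      IsConfig (Phi R.1 R.2.1 R.2.2.1 R.2.2.2 ω) ∧
      Phi R.1 R.2.1 R.2.2.1 R.2.2.2 ω ∈ TT R.1 R.2.1 R.2.2.1 R.2.2.2) := by
    intro R
    obtain ⟨k, hk, h⟩ := finite_energy ha hb hc hG (rectE R.1 R.2.1 R.2.2.1 R.2.2.2) rho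
    have h1 := h _ (meas_TT R.1 R.2.1 R.2.2.1 R.2.2.2)
    rw [TT_null hTI, mul_zero, nonpos_iff_eq_zero] at h1
    rw [ae_iff]
    simpa only [not_not] using h1
  filter_upwards [ae_all_iff.2 hnull, ae_isConfig hG, ae_recur hTI] with ω h1 hω hR hT
  obtain ⟨v1, v2, v3, hv, h12, h13, h23⟩ := hT
  obtain ⟨x0, x1, y0, y1, a1, a2, a3, a4, ht, hb'⟩ := rect_exists hR (hv v1 (Or.inl rfl)).1
    (hv v1 (Or.inl rfl)).2 (v1.1.natAbs + v1.2.1.natAbs + (v2.1.natAbs + v2.2.1.natAbs) +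
      (v3.1.natAbs + v3.2.1.natAbs) + 1)
  refine h1 (x0, x1, y0, y1) ⟨hω, Phi_isConfig hω ht hb', ?_⟩
  refine Phi_trif (by dsimp only; omega) (by dsimp only; omega) ht hb' (v1 := v1) (v2 := v2) (v3 := v3) ?_ h12 h13 h23
  intro z hz
  refine ⟨mem_rectK_of ⟨a1, a2, a3, a4⟩ ?_, (hv z hz).1, (hv z hz).2⟩
  rcases hz with rfl | rfl | rfl <;> omega

open scoped symmDiff in
lemma tail_trick {a b c : ℝ} (ha : 0 < a) (hb : 0 < b) (hc : 0 < c) {μ : Measure Config}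
    (hG : IsGibbs a b c μ) (hTI : TransInvariant μ) {E : Set Config} (hE : MeasurableSet E)
    (hinv : ∀ g ω, shiftConfig g ω ∈ E ↔ ω ∈ E) (F : Finset HexE) (ρ : Config) :
    μ {ω | ω ∈ E ∧ IsConfig ω ∧ IsConfig (patch F ρ ω) ∧ patch F ρ ω ∉ E} = 0 := by
  have := hG.1
  obtain ⟨k, hk, hfe⟩ := finite_energy ha hb hc hG F ρ
  have key : ∀ ε : ENNReal, 0 < ε →
      μ {ω | ω ∈ E ∧ IsConfig ω ∧ IsConfig (patch F ρ ω) ∧ patch F ρ ω ∉ E} ≤ ε + k * ε := by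
    intro ε hε
    obtain ⟨D, hD, hDE⟩ := exists_measure_symmDiff_lt_of_generateFrom_isSetRing (μ := μ)
      (C := measurableCylinders fun _ : HexE => Bool)
      ⟨empty_mem_measurableCylinders _, fun _ _ => union_mem_measurableCylinders,
        fun _ _ => sdiff_mem_measurableCylinders⟩
      ⟨{Set.univ}, Set.countable_singleton _, by
        simpa using univ_mem_measurableCylinders (fun _ : HexE => Bool), by simp⟩
      generateFrom_measurableCylinders.symm hE hε
    have hDm : MeasurableSet D := .of_mem_measurableCylinders hD
    obtain ⟨s, T, -, rfl⟩ := (mem_measurableCylinders _).1 hD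
    obtain ⟨N, hN⟩ : ∃ N : ℕ, ∀ e ∈ s ∪ F, e.1.natAbs ≤ N := by
      refine ⟨(s ∪ F).sup fun e => e.1.natAbs, fun e he => ?_⟩
      exact Finset.le_sup (f := fun e : HexE => e.1.natAbs) he
    set g : ℤ × ℤ := (2 * N + 1, 0) with hg
    set D' := shiftConfig g ⁻¹' cylinder s T with hD'
    have hDF : ∀ ω, patch F ρ ω ∈ D' ↔ ω ∈ D' := by
      intro ω
      have : s.restrict (shiftConfig g (patch F ρ ω)) = s.restrict (shiftConfig g ω) := by
        funext ⟨e, he⟩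
        have hn : shiftE g e ∉ F := by
          intro hF
          have h1 := hN _ (Finset.mem_union_right s hF)
          have h2 := hN _ (Finset.mem_union_left F he)
          simp only [shiftE, hg] at h1
          omega
        simp [shiftConfig, patch, hn]
      simp only [hD', Set.mem_preimage, mem_cylinder, this]
    have hD'm : MeasurableSet D' := meas_shift g hDm
    have hEpre : shiftConfig g ⁻¹' E = E := by ext ω; exact hinv g ω
    have hD'E : μ (D' ∆ E) < ε := by
      have : D' ∆ E = shiftConfig g ⁻¹' (cylinder s T ∆ E) := by
        rw [Set.preimage_symmDiff, hEpre]
      rw [this, (mp_shift hTI g).measure_preimage (hDm.symmDiff hE).nullMeasurableSet]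
      exact hDE
    have hsub : {ω | ω ∈ E ∧ IsConfig ω ∧ IsConfig (patch F ρ ω) ∧ patch F ρ ω ∉ E} ⊆
        (D' ∆ E) ∪ {ω | IsConfig ω ∧ IsConfig (patch F ρ ω) ∧ patch F ρ ω ∈ D' ∆ E} := by
      rintro ω ⟨h1, h2, h3, h4⟩
      by_cases h : ω ∈ D'
      · exact Or.inr ⟨h2, h3, Or.inl ⟨(hDF ω).2 h, h4⟩⟩
      · exact Or.inl (Or.inr ⟨h1, h⟩)
    refine (measure_mono hsub).trans ((measure_union_le _ _).trans (add_le_add hD'E.le ?_))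
    refine (hfe _ (hD'm.symmDiff hE)).trans ?_
    gcongr
  by_contra hne
  have hk1 : (1 + k) ≠ ⊤ := by simp [hk]
  have hfin := measure_ne_top μ {ω | ω ∈ E ∧ IsConfig ω ∧ IsConfig (patch F ρ ω) ∧ patch F ρ ω ∉ E}
  set t := μ {ω | ω ∈ E ∧ IsConfig ω ∧ IsConfig (patch F ρ ω) ∧ patch F ρ ω ∉ E} with ht
  have h := key (t / 2 / (1 + k)) (ENNReal.div_pos (ENNReal.half_pos hne).ne' hk1)
  have e : t / 2 / (1 + k) + k * (t / 2 / (1 + k)) = t / 2 := by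
    rw [← one_add_mul, ENNReal.mul_div_cancel (by simp) hk1]
  rw [e] at h
  exact absurd (ENNReal.half_lt_self hne hfin) (not_lt.2 h)

lemma TwoInf_null {a b c : ℝ} (ha : 0 < a) (hb : 0 < b) (hc : 0 < c) {μ : Measure Config}
    (hG : IsGibbs a b c μ) (hTI : TransInvariant μ) : ∀ᵐ ω ∂μ, ¬ TwoInf ω := by
  have := hG.1
  have hnull : ∀ R : ℤ × ℤ × ℤ × ℤ, ∀ᵐ ω ∂μ, ¬ (TwoInf ω ∧ IsConfig ω ∧
      IsConfig (Phi R.1 R.2.1 R.2.2.1 R.2.2.2 ω) ∧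
      ¬ TwoInf (Phi R.1 R.2.1 R.2.2.1 R.2.2.2 ω)) := by
    intro R
    have h := tail_trick ha hb hc hG hTI meas_TwoInf (fun g ω => TwoInf_shift g ω)
      (rectE R.1 R.2.1 R.2.2.1 R.2.2.2) rho
    rw [ae_iff]
    simp only [not_not]
    exact h
  filter_upwards [ae_all_iff.2 hnull, ae_isConfig hG, ae_recur hTI,
    ThreeInf_null ha hb hc hG hTI] with ω h1 hω hR h3 hT
  obtain ⟨v1, v2, hv1, hv2, hi1, hi2, h12⟩ := hT
  obtain ⟨x0, x1, y0, y1, a1, a2, a3, a4, ht, hb'⟩ := rect_exists hR hv1 hi1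
    (v1.1.natAbs + v1.2.1.natAbs + (v2.1.natAbs + v2.2.1.natAbs) + 1)
  refine h1 (x0, x1, y0, y1) ⟨⟨v1, v2, hv1, hv2, hi1, hi2, h12⟩, hω, Phi_isConfig hω ht hb', ?_⟩
  refine Phi_merge (by dsimp only; omega) (by dsimp only; omega) (v1 := v1) (v2 := v2) ?_ h12 h3
  rintro z (rfl | rfl)
  · exact ⟨mem_rectK_of ⟨a1, a2, a3, a4⟩ (by omega), hv1, hi1⟩
  · exact ⟨mem_rectK_of ⟨a1, a2, a3, a4⟩ (by omega), hv2, hi2⟩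

lemma num_le_one {ω : Config} (h : ¬ TwoInf ω) : numInfClusters ω conf001 ≤ 1 := by
  unfold numInfClusters
  rw [Set.encard_le_one_iff]
  rintro C C' ⟨⟨v, hv, rfl⟩, hi⟩ ⟨⟨w, hw, rfl⟩, hi'⟩
  by_cases hr : Reach (alive ω) v w
  · ext z
    exact ⟨fun hz => (reach_symm hr).trans hz, fun hz => hr.trans hz⟩
  · exact absurd ⟨v, w, hv, hw, hi, hi', hr⟩ h

/-- For any translation-invariant Gibbs measure `μ` for the 1-2 model (with any
weights `a, b, c > 0`), `μ`-almost every 1-2 model configuration has at most one infinite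
`{001}`-cluster. -/
theorem at_most_one_infinite_001_cluster
    (a b c : ℝ) (ha : 0 < a) (hb : 0 < b) (hc : 0 < c)
    (μ : Measure Config) (hGibbs : IsGibbs a b c μ) (hTI : TransInvariant μ) :
    μ {ω : Config | IsConfig ω ∧ numInfClusters ω conf001 ≤ 1} = 1 := by
  have := hGibbs.1
  have h : ∀ᵐ ω ∂μ, ω ∈ {ω : Config | IsConfig ω ∧ numInfClusters ω conf001 ≤ 1} := by
    filter_upwards [ae_isConfig hGibbs, TwoInf_null ha hb hc hGibbs hTI] with ω h1 h2
    exact ⟨h1, num_le_one h2⟩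
  rw [measure_eq_measure_of_null_sdiff (Set.subset_univ _) (by
    rw [← Set.compl_eq_univ_sdiff]; exact h)]
  exact measure_univ
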